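/- arXiv:0905.2497 — 3 statements merged into one kernel-verified Lean document; each statement's English description precedes it below -/
import Mathlib

section
/- Under the polynomial parametric setting and the Archimedean assumption, assume K_y is nonempty for every y ∈ Y, and suppose that for some index k the description of K includes the boolean constraint x_k² − x_k = 0 (so x_k ∈ {0,1} on K). For each i ≥ i_0 let z^i be a nearly optimal feasible solution of the i-th semidefinite relaxation with L_{z^i}(f) ≤ ρ_i + 1/i. If for φ-almost all y ∈ Y every optimal solution x ∈ X*_y has x_k = 1, then lim_{i→∞} z^i_{e(k)0} = 1; if for φ-almost all y ∈ Y every optimal solution x ∈ X*_y has x_k = 0, then lim_{i→∞} z^i_{e(k)0} = 0 (where e(k) ∈ ℕ^n is the k-th unit multi-index). -/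
open MeasureTheory MvPolynomial Filter Topology Set

noncomputable section

/-- The Riesz-like linear functional `L_z` associated with a double-indexed real
sequence `z = (z_{αβ})`, sending `Σ f_{αβ} x^α y^β` to `Σ f_{αβ} z_{αβ}`. -/
def Lz (n p : ℕ) (z : (Fin n → ℕ) → (Fin p → ℕ) → ℝ)
    (q : MvPolynomial (Fin n ⊕ Fin p) ℝ) : ℝ :=
  ∑ d ∈ q.support, q.coeff d * z (fun k => d (Sum.inl k)) (fun l => d (Sum.inr l))

/-- Every monomial `x^α y^β` of `q` satisfies `|α| ≤ i` and `|β| ≤ i`, i.e. `q` is in the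
span of the monomial basis indexing the moment matrix `M_i`. -/
def DegOK (n p : ℕ) (i : ℕ) (q : MvPolynomial (Fin n ⊕ Fin p) ℝ) : Prop :=
  ∀ d ∈ q.support, (∑ k, d (Sum.inl k)) ≤ i ∧ (∑ l, d (Sum.inr l)) ≤ i

/-- `⌈deg h / 2⌉`. -/
def halfDeg {σ : Type*} (h : MvPolynomial σ ℝ) : ℕ := (h.totalDegree + 1) / 2

/-- Feasibility of the sequence `z` for the `i`-th moment relaxation:
`M_i(z) ⪰ 0`, `M_{i-v_j}(h_j z) ⪰ 0` for all `j`, and `L_z(y^β) = γ_β` for `|β| ≤ 2i`.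
Positive semidefiniteness of the moment (resp. localizing) matrix is expressed through
nonnegativity of the associated quadratic forms `c ↦ cᵀ M_i(z) c = L_z(q²)`
(resp. `cᵀ M_{i-v_j}(h_j z) c = L_z(h_j q²)`), `q` ranging over the polynomials spanned
by the monomials indexing the matrix. -/
def RelaxFeasible (n p : ℕ) {ι : Type*} [Fintype ι]
    (H : ι → MvPolynomial (Fin n ⊕ Fin p) ℝ)
    (γ : (Fin p → ℕ) → ℝ) (i : ℕ)
    (z : (Fin n → ℕ) → (Fin p → ℕ) → ℝ) : Prop :=
  (∀ q, DegOK n p i q → 0 ≤ Lz n p z (q ^ 2)) ∧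
  (∀ j, ∀ q, DegOK n p (i - halfDeg (H j)) q → 0 ≤ Lz n p z (H j * q ^ 2)) ∧
  (∀ β : Fin p → ℕ, (∑ l, β l) ≤ 2 * i → z (fun _ => 0) β = γ β)

/-- Optimal value `ρ_i` of the `i`-th (primal) semidefinite relaxation. -/
def rhoSDP (n p : ℕ) {ι : Type*} [Fintype ι]
    (H : ι → MvPolynomial (Fin n ⊕ Fin p) ℝ)
    (γ : (Fin p → ℕ) → ℝ) (f : MvPolynomial (Fin n ⊕ Fin p) ℝ) (i : ℕ) : ℝ :=
  sInf {r | ∃ z, RelaxFeasible n p H γ i z ∧ r = Lz n p z f}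

/-- Evaluation of a polynomial in `(x, y)` at a point of `ℝ^n × ℝ^p`. -/
def evalXY (n p : ℕ) (q : MvPolynomial (Fin n ⊕ Fin p) ℝ)
    (w : (Fin n → ℝ) × (Fin p → ℝ)) : ℝ :=
  eval (Sum.elim w.1 w.2) q

/-- Optimal value `ρ` of the infinite-dimensional problem `P`: the infimum of `∫_K f dμ`
over finite Borel measures `μ` on `K` whose marginal on `ℝ^p` is `φ`. -/
def rhoP (n p : ℕ) (f : MvPolynomial (Fin n ⊕ Fin p) ℝ)
    (K : Set ((Fin n → ℝ) × (Fin p → ℝ))) (φ : Measure (Fin p → ℝ)) : ℝ :=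
  sInf {r | ∃ μ : Measure ((Fin n → ℝ) × (Fin p → ℝ)),
    IsFiniteMeasure μ ∧ μ Kᶜ = 0 ∧ μ.map Prod.snd = φ ∧
    r = ∫ w in K, evalXY n p f w ∂μ}

/-- `i₀ := max(⌈deg f / 2⌉, max_j ⌈deg h_j / 2⌉)`. -/
def iZero (n p : ℕ) {ι : Type*} [Fintype ι]
    (H : ι → MvPolynomial (Fin n ⊕ Fin p) ℝ)
    (f : MvPolynomial (Fin n ⊕ Fin p) ℝ) : ℕ :=
  max (halfDeg f) (Finset.univ.sup fun j => halfDeg (H j))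

/-- The Archimedean (Putinar) assumption for the family `H`: for some `N`,
`N - ‖(x,y)‖²` lies in the quadratic module generated by the `H j`. -/
def ArchimedeanQM (n p : ℕ) {ι : Type*} [Fintype ι]
    (H : ι → MvPolynomial (Fin n ⊕ Fin p) ℝ) : Prop :=
  ∃ (N : ℝ) (σ0 : MvPolynomial (Fin n ⊕ Fin p) ℝ)
    (σ : ι → MvPolynomial (Fin n ⊕ Fin p) ℝ),
    IsSumSq σ0 ∧ (∀ j, IsSumSq (σ j)) ∧
    C N - (∑ i : Fin n ⊕ Fin p, X i ^ 2) = σ0 + ∑ j, σ j * H j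

namespace Aux16

/-- The quadratic module. -/
def QM {σ ι : Type*} (H : ι → MvPolynomial σ ℝ) : AddSubmonoid (MvPolynomial σ ℝ) :=
  AddSubmonoid.closure ({q | ∃ a, q = a ^ 2} ∪ {q | ∃ j a, q = H j * a ^ 2})

section
variable {σ ι : Type*} {H : ι → MvPolynomial σ ℝ}

lemma QM_sq (a : MvPolynomial σ ℝ) : a ^ 2 ∈ QM H :=
  AddSubmonoid.subset_closure (Or.inl ⟨a, rfl⟩)

lemma QM_H (j : ι) (a : MvPolynomial σ ℝ) : H j * a ^ 2 ∈ QM H :=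
  AddSubmonoid.subset_closure (Or.inr ⟨j, a, rfl⟩)

lemma QM_mul_sq (b : MvPolynomial σ ℝ) {m : MvPolynomial σ ℝ} (hm : m ∈ QM H) :
    b ^ 2 * m ∈ QM H := by
  induction hm using AddSubmonoid.closure_induction with
  | mem x hx =>
    rcases hx with ⟨a, rfl⟩ | ⟨j, a, rfl⟩
    · rw [← mul_pow]; exact QM_sq _
    · have : b ^ 2 * (H j * a ^ 2) = H j * (b * a) ^ 2 := by ring
      rw [this]; exact QM_H _ _
  | zero => simp [(QM H).zero_mem]
  | add x y _ _ hx hy => rw [mul_add]; exact (QM H).add_mem hx hy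

lemma QM_C {r : ℝ} (hr : 0 ≤ r) : (C r : MvPolynomial σ ℝ) ∈ QM H := by
  have : (C r : MvPolynomial σ ℝ) = (C (√r)) ^ 2 := by
    rw [← C_pow, Real.sq_sqrt hr]
  rw [this]; exact QM_sq _

lemma QM_smul {r : ℝ} (hr : 0 ≤ r) {m : MvPolynomial σ ℝ} (hm : m ∈ QM H) :
    C r * m ∈ QM H := by
  have : (C r : MvPolynomial σ ℝ) = (C (√r)) ^ 2 := by
    rw [← C_pow, Real.sq_sqrt hr]
  rw [this]; exact QM_mul_sq _ hm

lemma QM_mul_H {s : MvPolynomial σ ℝ} (hs : IsSumSq s) (j : ι) : s * H j ∈ QM H := by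
  induction hs with
  | zero => simp [(QM H).zero_mem]
  | sq_add a _ ih =>
    rw [add_mul]
    refine (QM H).add_mem ?_ ih
    have : a * a * H j = H j * a ^ 2 := by ring
    rw [this]; exact QM_H _ _

lemma QM_sumSq {s : MvPolynomial σ ℝ} (hs : IsSumSq s) : s ∈ QM H := by
  induction hs with
  | zero => simp [(QM H).zero_mem]
  | sq_add a _ ih =>
    refine (QM H).add_mem ?_ ih
    rw [← sq]; exact QM_sq _

/-- bounded coordinates -/
def BddQM (H : ι → MvPolynomial σ ℝ) : Prop := ∃ N : ℝ, 1 ≤ N ∧ ∀ i, C N - X i ^ 2 ∈ QM H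

lemma bdd_sq (h : BddQM H) (q : MvPolynomial σ ℝ) :
    ∃ c : ℝ, 0 ≤ c ∧ C c - q ^ 2 ∈ QM H := by
  obtain ⟨N, hN, h⟩ := h
  induction q using MvPolynomial.induction_on with
  | C a => exact ⟨a ^ 2, sq_nonneg _, by simp [(QM H).zero_mem]⟩
  | add p q hp hq =>
    obtain ⟨c, hc, hp⟩ := hp
    obtain ⟨d, hd, hq⟩ := hq
    refine ⟨2 * c + 2 * d, by positivity, ?_⟩
    have : C (2 * c + 2 * d) - (p + q) ^ 2
        = C 2 * (C c - p ^ 2) + C 2 * (C d - q ^ 2) + (p - q) ^ 2 := by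
      simp only [C_add, C_mul]
      have : (C 2 : MvPolynomial σ ℝ) = 2 := map_ofNat C 2
      rw [this]; ring
    rw [this]
    exact (QM H).add_mem ((QM H).add_mem (QM_smul (by norm_num) hp) (QM_smul (by norm_num) hq))
      (QM_sq _)
  | mul_X p i hp =>
    obtain ⟨c, hc, hp⟩ := hp
    refine ⟨N * c, by positivity, ?_⟩
    have : C (N * c) - (p * X i) ^ 2 = C N * (C c - p ^ 2) + p ^ 2 * (C N - X i ^ 2) := by
      simp only [C_mul]; ring
    rw [this]
    exact (QM H).add_mem (QM_smul (by linarith) hp) (QM_mul_sq _ (h i))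

lemma bdd_all (h : BddQM H) (q : MvPolynomial σ ℝ) :
    ∃ c : ℝ, 0 ≤ c ∧ C c - q ∈ QM H ∧ C c + q ∈ QM H := by
  obtain ⟨c, hc, hq⟩ := bdd_sq h q
  have h2 : (C (1/2 : ℝ) : MvPolynomial σ ℝ) * 2 = 1 := by
    have : (2 : MvPolynomial σ ℝ) = C 2 := (map_ofNat C 2).symm
    rw [this, ← C_mul]; norm_num
  have e : (C ((c+1)/2) : MvPolynomial σ ℝ) = C (1/2) * (C c + 1) := by
    rw [← C_1, ← C_add, ← C_mul]; congr 1; ring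
  refine ⟨(c + 1) / 2, by positivity, ?_, ?_⟩
  · have : C ((c+1)/2) - q = C (1/2) * (C c - q ^ 2) + C (1/2) * (1 - q) ^ 2 := by
      rw [e]; linear_combination (q) * h2
    rw [this]
    exact (QM H).add_mem (QM_smul (by norm_num) hq) (QM_smul (by norm_num) (QM_sq _))
  · have : C ((c+1)/2) + q = C (1/2) * (C c - q ^ 2) + C (1/2) * (1 + q) ^ 2 := by
      rw [e]; linear_combination (-q) * h2
    rw [this]
    exact (QM H).add_mem (QM_smul (by norm_num) hq) (QM_smul (by norm_num) (QM_sq _))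

lemma pow_bdd {t : MvPolynomial σ ℝ} (ht : 1 - t ^ 2 ∈ QM H) (k : ℕ) :
    1 - (t ^ k) ^ 2 ∈ QM H := by
  induction k with
  | zero => simp [(QM H).zero_mem]
  | succ k ih =>
    have : 1 - (t ^ (k+1)) ^ 2 = (1 - t ^ 2) + t ^ 2 * (1 - (t ^ k) ^ 2) := by ring
    rw [this]
    exact (QM H).add_mem ht (QM_mul_sq _ ih)

/-- state space -/
def St (H : ι → MvPolynomial σ ℝ) : Set (MvPolynomial σ ℝ → ℝ) :=
  {F | (∀ p q, F (p + q) = F p + F q) ∧ (∀ (c : ℝ) q, F (C c * q) = c * F q) ∧ F 1 = 1 ∧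
    ∀ m ∈ QM H, 0 ≤ F m}

lemma St_sub {F : MvPolynomial σ ℝ → ℝ} (hF : F ∈ St H) (p q) : F (p - q) = F p - F q := by
  have := hF.1 (p - q) q
  rw [sub_add_cancel] at this; linarith

lemma St_C {F : MvPolynomial σ ℝ → ℝ} (hF : F ∈ St H) (c : ℝ) : F (C c) = c := by
  have := hF.2.1 c 1
  rw [hF.2.2.1] at this; simpa using this

lemma real_seq {a : ℕ → ℝ} {c B : ℝ} (hc : 0 ≤ c) (h : ∀ k, a k ^ 2 ≤ c * a (k+1))
    (hB : ∀ k, a (k+1) ≤ B) : |a 0| ≤ c := by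
  rcases hc.eq_or_lt with rfl | hc
  · have := h 0
    have : a 0 = 0 := by nlinarith [sq_nonneg (a 0)]
    simp [this]
  by_contra hlt
  push Not at hlt
  set r := |a 0| / c with hr
  have hr1 : 1 < r := by rwa [hr, lt_div_iff₀ hc, one_mul]
  have key : ∀ k, c * r ^ (2 ^ k) ≤ |a k| := by
    intro k
    induction k with
    | zero => simp [hr]; field_simp; rfl
    | succ k ih =>
      have h1 := h k
      have h2 : (c * r ^ (2 ^ k)) ^ 2 ≤ a k ^ 2 := by
        rw [← sq_abs (a k)]
        exact pow_le_pow_left₀ (by positivity) ih 2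
      have h3 : c * (c * r ^ (2 ^ (k+1))) ≤ c * a (k+1) := by
        calc c * (c * r ^ (2 ^ (k+1))) = (c * r ^ (2 ^ k)) ^ 2 := by ring
          _ ≤ _ := h2.trans h1
      exact (le_of_mul_le_mul_left h3 hc).trans (le_abs_self _)
  have hpos : ∀ k, 0 ≤ a (k+1) := by
    intro k
    have := (sq_nonneg _).trans (h k)
    exact nonneg_of_mul_nonneg_right this hc
  have ht : Tendsto (fun k : ℕ => r ^ k) atTop atTop := tendsto_pow_atTop_atTop_of_one_lt hr1
  obtain ⟨k, hk⟩ := (ht.eventually_gt_atTop (B / c)).exists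
  have hk2 : r ^ k ≤ r ^ (2 ^ (k+1)) :=
    pow_le_pow_right₀ hr1.le ((Nat.lt_two_pow_self).le.trans (Nat.pow_le_pow_right (by norm_num) (Nat.le_succ k)))
  have h4 := key (k+1)
  rw [abs_of_nonneg (hpos k)] at h4
  rw [div_lt_iff₀ hc] at hk
  nlinarith [hB k]

lemma St_key {F : MvPolynomial σ ℝ → ℝ} (hF : F ∈ St H) (hb : BddQM H)
    {t : MvPolynomial σ ℝ} (ht : 1 - t ^ 2 ∈ QM H) {m : MvPolynomial σ ℝ} (hm : m ∈ QM H) :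
    |F (t * m)| ≤ F m := by
  obtain ⟨B, hB0, hB, -⟩ := bdd_all hb m
  have hpos := hF.2.2.2
  have := real_seq (a := fun k => F (t ^ (2 ^ k) * m)) (c := F m) (B := B) (hpos m hm) ?_ ?_
  · simpa using this
  · intro k
    set u := t ^ (2 ^ k) with hu
    have hu2 : t ^ (2 ^ (k+1)) = u ^ 2 := by rw [hu, ← pow_mul, pow_succ]
    simp only [hu2]
    have hq : ∀ r : ℝ, 0 ≤ F m * (r * r) + (2 * F (u * m)) * r + F (u ^ 2 * m) := by
      intro r
      have h1 := hpos _ (QM_mul_sq (C r + u) hm)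
      have e : (C r + u) ^ 2 * m = C (r * r) * m + C (2 * r) * (u * m) + u ^ 2 * m := by
        have : (C 2 : MvPolynomial σ ℝ) = 2 := map_ofNat C 2
        simp only [C_mul, this]; ring
      rw [e, hF.1, hF.1, hF.2.1, hF.2.1] at h1
      linarith
    have := discrim_le_zero hq
    unfold discrim at this
    linarith
  · intro k
    set u := t ^ (2 ^ k) with hu
    have hu2 : t ^ (2 ^ (k+1)) = u ^ 2 := by rw [hu, ← pow_mul, pow_succ]
    simp only [hu2]
    have h1 := hpos _ (QM_mul_sq u hB)
    have h2 := hpos _ (pow_bdd ht (2 ^ k))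
    rw [← hu, St_sub hF, hF.2.2.1] at h2
    have e : u ^ 2 * (C B - m) = C B * u ^ 2 - u ^ 2 * m := by ring
    rw [e, St_sub hF, hF.2.1] at h1
    nlinarith

lemma St_convex : Convex ℝ (St H) := by
  intro F hF G hG a b ha hb hab
  refine ⟨fun p q => ?_, fun c q => ?_, ?_, fun m hm => ?_⟩ <;>
    simp only [Pi.add_apply, Pi.smul_apply, smul_eq_mul]
  · rw [hF.1, hG.1]; ring
  · rw [hF.2.1, hG.2.1]; ring
  · rw [hF.2.2.1, hG.2.2.1]; linarith
  · have := hF.2.2.2 m hm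
    have := hG.2.2.2 m hm
    positivity

lemma St_compact (hb : BddQM H) : IsCompact (St H) := by
  choose c hc0 hc1 hc2 using bdd_all hb
  have hcl : IsClosed (St H) := by
    have : St H = (⋂ p, ⋂ q, {F | F (p + q) = F p + F q}) ∩
        ((⋂ c : ℝ, ⋂ q, {F | F (C c * q) = c * F q}) ∩ ({F | F 1 = 1} ∩
        ⋂ m ∈ QM H, {F | 0 ≤ F m})) := by
      ext F; simp [St]
    rw [this]
    refine IsClosed.inter (isClosed_iInter fun p => isClosed_iInter fun q => ?_)
      (IsClosed.inter (isClosed_iInter fun p => isClosed_iInter fun q => ?_)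
      (IsClosed.inter ?_ (isClosed_biInter fun m _ => ?_)))
    · exact isClosed_eq (by fun_prop) (by fun_prop)
    · exact isClosed_eq (by fun_prop) (by fun_prop)
    · exact isClosed_eq (by fun_prop) (by fun_prop)
    · exact isClosed_le (by fun_prop) (by fun_prop)
  refine IsCompact.of_isClosed_subset (isCompact_univ_pi fun q => isCompact_Icc (a := -c q) (b := c q))
    hcl ?_
  intro F hF q _
  have h1 := hF.2.2.2 _ (hc1 q)
  have h2 := hF.2.2.2 _ (hc2 q)
  rw [St_sub hF, St_C hF] at h1
  rw [hF.1, St_C hF] at h2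
  constructor <;> linarith

lemma St_extreme (hb : BddQM H) {F : MvPolynomial σ ℝ → ℝ} (hF : F ∈ (St H).extremePoints ℝ)
    (t : MvPolynomial σ ℝ) (ht : 1 - (C 2 * t) ^ 2 ∈ QM H) (h : MvPolynomial σ ℝ) :
    F (t * h) = F t * F h := by
  obtain ⟨hFS, hext⟩ := hF
  have key : ∀ m ∈ QM H, |F (t * m)| ≤ F m / 2 := by
    intro m hm
    have := St_key hFS hb ht hm
    rw [mul_assoc, hFS.2.1, abs_mul, abs_two] at this
    linarith
  have ht1 : |F t| ≤ 1 / 2 := by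
    have := key 1 (by simpa using QM_sq (H := H) 1)
    rwa [mul_one, hFS.2.2.1] at this
  have mem : ∀ s : ℝ, |s| = 1 → (fun h => (F h + s * F (t * h)) / (1 + s * F t)) ∈ St H := by
    intro s hs
    have hst : |s * F t| ≤ 1 / 2 := by rwa [abs_mul, hs, one_mul]
    have hp : 0 < 1 + s * F t := by linarith [neg_abs_le (s * F t)]
    refine ⟨fun p q => ?_, fun c q => ?_, ?_, fun m hm => ?_⟩
    · beta_reduce; rw [mul_add, hFS.1, hFS.1]; ring
    · beta_reduce; rw [show t * (C c * q) = C c * (t * q) by ring, hFS.2.1, hFS.2.1]; ring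
    · simp only [mul_one, hFS.2.2.1]; exact div_self hp.ne'
    · have h1 := key m hm
      have h2 : |s * F (t * m)| ≤ F m / 2 := by rwa [abs_mul, hs, one_mul]
      have h3 := hFS.2.2.2 m hm
      apply div_nonneg _ hp.le
      linarith [neg_abs_le (s * F (t * m))]
  have h1 := mem 1 (by simp)
  have h2 := mem (-1) (by simp)
  obtain ⟨l, u⟩ := abs_le.1 ht1
  have hseg : F ∈ openSegment ℝ (fun h => (F h + 1 * F (t * h)) / (1 + 1 * F t))
      (fun h => (F h + (-1) * F (t * h)) / (1 + (-1) * F t)) := by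
    refine ⟨(1 + F t) / 2, (1 - F t) / 2, by linarith, by linarith, by ring, ?_⟩
    funext q
    simp only [Pi.add_apply, Pi.smul_apply, smul_eq_mul]
    have e1 : 1 + 1 * F t ≠ 0 := by linarith
    have e2 : 1 + -1 * F t ≠ 0 := by linarith
    have e3 : 1 + F t ≠ 0 := by linarith
    have e4 : 1 - F t ≠ 0 := by linarith
    rw [show 1 + 1 * F t = 1 + F t by ring, show 1 + -1 * F t = 1 - F t by ring]
    field_simp
    ring
  have h3 := hext h1 h2 hseg
  have h4 := congrFun h3 h
  have e1 : 1 + 1 * F t ≠ 0 := by linarith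
  beta_reduce at h4
  rw [div_eq_iff e1] at h4
  linarith

lemma St_eval (hb : BddQM H) {F : MvPolynomial σ ℝ → ℝ} (hF : F ∈ (St H).extremePoints ℝ)
    (q : MvPolynomial σ ℝ) : F q = eval (fun i => F (X i)) q := by
  have hFS := hF.1
  have hX : ∀ i q, F (X i * q) = F (X i) * F q := by
    intro i q
    obtain ⟨N, hN, hi⟩ := hb
    have hs : 0 < √N := Real.sqrt_pos.2 (by linarith)
    set s : ℝ := (2 * √N)⁻¹ with hsdef
    have hs0 : s ≠ 0 := by positivity
    have := St_extreme ⟨N, hN, hi⟩ hF (C s * X i) ?_ q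
    · rw [mul_assoc, hFS.2.1, hFS.2.1, mul_assoc] at this
      exact mul_left_cancel₀ hs0 this
    · have e : 1 - (C 2 * (C s * X i)) ^ 2 = C (N⁻¹) * (C N - X i ^ 2) := by
        have e1 : (2 * s) ^ 2 = N⁻¹ := by
          rw [hsdef]; field_simp; rw [Real.sq_sqrt (by linarith)]
        have e2 : (C 2 * (C s * X i) : MvPolynomial σ ℝ) ^ 2 = C ((2 * s) ^ 2) * X i ^ 2 := by
          simp only [C_mul, C_pow]; ring
        rw [e2, e1, mul_sub, ← C_mul, inv_mul_cancel₀ (by linarith), C_1]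
      rw [e]
      exact QM_smul (by positivity) (hi i)
  induction q using MvPolynomial.induction_on with
  | C a => rw [St_C hFS]; simp
  | add p q hp hq => rw [hFS.1, hp, hq]; simp
  | mul_X p i hp => rw [mul_comm, hX, hp]; simp [mul_comm]

/-- dual form of Putinar -/
theorem putinar_dual (hb : BddQM H) {F : MvPolynomial σ ℝ → ℝ} (hF : F ∈ St H)
    (q : MvPolynomial σ ℝ) (hq : ∀ v : σ → ℝ, (∀ j, 0 ≤ eval v (H j)) → 0 ≤ eval v q) :
    0 ≤ F q := by
  rw [← closure_convexHull_extremePoints (St_compact hb) St_convex] at hF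
  have hcl : IsClosed {G : MvPolynomial σ ℝ → ℝ | 0 ≤ G q} :=
    isClosed_le (by fun_prop) (by fun_prop)
  have hcv : Convex ℝ {G : MvPolynomial σ ℝ → ℝ | 0 ≤ G q} := by
    intro F hF G hG a b ha hb hab
    simp only [mem_ofPred_eq, Pi.add_apply, Pi.smul_apply, smul_eq_mul] at *
    positivity
  refine closure_minimal (convexHull_min ?_ hcv) hcl hF
  intro G hG
  simp only [mem_ofPred_eq]
  rw [St_eval hb hG]
  apply hq
  intro j
  rw [← St_eval hb hG]
  have := hG.1.2.2.2 _ (QM_H j 1)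
  simpa using this

lemma arch_bdd {σ ι : Type*} [Fintype σ] [Fintype ι] {H : ι → MvPolynomial σ ℝ}
    (h : ∃ (N : ℝ) (σ0 : MvPolynomial σ ℝ) (s : ι → MvPolynomial σ ℝ),
      IsSumSq σ0 ∧ (∀ j, IsSumSq (s j)) ∧
      C N - (∑ i : σ, X i ^ 2) = σ0 + ∑ j, s j * H j) : BddQM H := by
  classical
  obtain ⟨N, s0, s, hs0, hs, h⟩ := h
  refine ⟨|N| + 1, by linarith [abs_nonneg N], fun i => ?_⟩
  have h1 : C N - (∑ i : σ, X i ^ 2) ∈ QM H := by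
    rw [h]
    exact (QM H).add_mem (QM_sumSq hs0) ((QM H).sum_mem fun j _ => QM_mul_H (hs j) j)
  have e : (C (|N| + 1) - X i ^ 2 : MvPolynomial σ ℝ) =
      C (|N| + 1 - N) + ((C N - (∑ i : σ, X i ^ 2)) + ∑ j ∈ Finset.univ.erase i, X j ^ 2) := by
    rw [← Finset.add_sum_erase Finset.univ (fun j => (X j : MvPolynomial σ ℝ) ^ 2) (Finset.mem_univ i)]
    rw [C_sub]; ring
  rw [e]
  exact (QM H).add_mem (QM_C (by linarith [le_abs_self N])) ((QM H).add_mem h1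
    ((QM H).sum_mem fun j _ => QM_sq _))

end
end Aux16
namespace Aux16

lemma penal {α : Type*} [TopologicalSpace α] {A : Set α} (hA : IsCompact A) {a b : α → ℝ}
    (ha : Continuous a) (hb : Continuous b) (hb0 : ∀ w ∈ A, 0 ≤ b w)
    (hab : ∀ w ∈ A, b w = 0 → a w ≤ 0) {ε : ℝ} (hε : 0 < ε) :
    ∃ N : ℝ, ∀ c ≥ N, ∀ w ∈ A, a w - c * b w ≤ ε := by
  have hA' : IsCompact (A ∩ {w | ε ≤ a w}) :=
    hA.inter_right (isClosed_le continuous_const ha)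
  rcases (A ∩ {w | ε ≤ a w}).eq_empty_or_nonempty with he | hne
  · refine ⟨0, fun c hc w hw => ?_⟩
    have : ¬ (ε ≤ a w) := fun h => by
      have : w ∈ A ∩ {w | ε ≤ a w} := ⟨hw, h⟩
      rw [he] at this; exact this
    have := mul_nonneg hc (hb0 w hw)
    linarith
  · obtain ⟨w0, hw0, hmin⟩ := hA'.exists_isMinOn hne hb.continuousOn
    obtain ⟨w1, hw1, hmax⟩ := hA'.exists_isMaxOn hne ha.continuousOn
    have hδ : 0 < b w0 := by
      rcases (hb0 w0 hw0.1).eq_or_lt with h | h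
      · have h1 := hab w0 hw0.1 h.symm
        have h2 : ε ≤ a w0 := hw0.2
        linarith
      · exact h
    refine ⟨max 0 (a w1 / b w0), fun c hc w hw => ?_⟩
    have hc0 : 0 ≤ c := (le_max_left _ _).trans hc
    have hc1 : a w1 / b w0 ≤ c := (le_max_right _ _).trans hc
    have h0 := mul_nonneg hc0 (hb0 w hw)
    by_cases h : ε ≤ a w
    · have h1 : b w0 ≤ b w := hmin ⟨hw, h⟩
      have h2 : a w ≤ a w1 := hmax ⟨hw, h⟩
      rw [div_le_iff₀ hδ] at hc1
      have := mul_le_mul_of_nonneg_left h1 hc0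
      linarith
    · linarith

section
variable {E F : Type*} [MetricSpace E] [MetricSpace F]

/-- slice -/
def sl (K : Set (E × F)) (y : F) : Set (E × F) := K ∩ {w | w.2 = y}

/-- fiberwise sup -/
def Sup (K : Set (E × F)) (g : E × F → ℝ) (y : F) : ℝ := sSup (g '' sl K y)

/-- penalised sup -/
def un (K : Set (E × F)) (g : E × F → ℝ) (n : ℕ) (y : F) : ℝ :=
  sSup ((fun w : E × F => g w - n * dist y w.2) '' K)

variable {K : Set (E × F)} {g : E × F → ℝ}

lemma sl_compact (hK : IsCompact K) (y : F) : IsCompact (sl K y) :=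
  hK.inter_right (isClosed_eq continuous_snd continuous_const)

lemma le_Sup (hK : IsCompact K) (hg : Continuous g) {y : F} {w : E × F} (hw : w ∈ sl K y) :
    g w ≤ Sup K g y :=
  le_csSup ((sl_compact hK y).bddAbove_image hg.continuousOn) ⟨w, hw, rfl⟩

lemma exists_Sup (hK : IsCompact K) (hg : Continuous g) {y : F} (hy : (sl K y).Nonempty) :
    ∃ w ∈ sl K y, Sup K g y = g w :=
  (sl_compact hK y).exists_sSup_image_eq hy hg.continuousOn

lemma Sup_le (hK : IsCompact K) (hg : Continuous g) {y : F} (hy : (sl K y).Nonempty) {c : ℝ}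
    (h : ∀ w ∈ sl K y, g w ≤ c) : Sup K g y ≤ c := by
  obtain ⟨w, hw, e⟩ := exists_Sup hK hg hy
  rw [e]; exact h w hw

lemma un_cont (hK : IsCompact K) (hg : Continuous g) (n : ℕ) : Continuous (un K g n) := by
  apply hK.continuous_sSup (f := fun (y : F) (w : E × F) => g w - n * dist y w.2)
  simp only [Function.HasUncurry.uncurry, id]
  fun_prop

lemma le_un (hK : IsCompact K) (hg : Continuous g) (n : ℕ) (y : F) {w : E × F} (hw : w ∈ K) :
    g w - n * dist y w.2 ≤ un K g n y :=
  le_csSup (hK.bddAbove_image (by fun_prop)) ⟨w, hw, rfl⟩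

lemma un_le (hK : IsCompact K) (hg : Continuous g) (n : ℕ) (y : F) (hne : K.Nonempty) {c : ℝ}
    (h : ∀ w ∈ K, g w - n * dist y w.2 ≤ c) : un K g n y ≤ c := by
  apply csSup_le (hne.image _)
  rintro _ ⟨w, hw, rfl⟩
  exact h w hw

lemma Sup_le_un (hK : IsCompact K) (hg : Continuous g) (n : ℕ) {y : F} (hy : (sl K y).Nonempty) :
    Sup K g y ≤ un K g n y := by
  refine Sup_le hK hg hy fun w hw => ?_
  have := le_un hK hg n y hw.1
  rw [hw.2, dist_self] at this
  simpa using this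

lemma un_tendsto (hK : IsCompact K) (hg : Continuous g) {y : F} (hy : (sl K y).Nonempty) :
    Tendsto (fun n => un K g n y) atTop (𝓝 (Sup K g y)) := by
  rw [Metric.tendsto_atTop]
  intro ε hε
  obtain ⟨N, hN⟩ := penal hK (a := fun w => g w - Sup K g y) (b := fun w => dist y w.2)
    (by fun_prop) (by fun_prop) (fun w _ => dist_nonneg) (fun w hw h => by
      have := le_Sup hK hg (y := y) (w := w) ⟨hw, (dist_eq_zero.1 h).symm⟩
      linarith) (half_pos hε)
  obtain ⟨n0, hn0⟩ := exists_nat_ge N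
  refine ⟨n0, fun n hn => ?_⟩
  have h1 := Sup_le_un hK hg n hy
  have h2 : un K g n y ≤ Sup K g y + ε / 2 := by
    refine un_le hK hg n y (hy.mono inter_subset_left) fun w hw => ?_
    have := hN n (hn0.trans (by exact_mod_cast hn)) w hw
    linarith
  rw [Real.dist_eq, abs_lt]
  constructor <;> linarith

lemma exists_bd (hK : IsCompact K) (hg : Continuous g) : ∃ B, 0 ≤ B ∧ ∀ w ∈ K, |g w| ≤ B := by
  obtain ⟨B, hB⟩ := hK.exists_bound_of_continuousOn hg.continuousOn
  exact ⟨max B 0, le_max_right _ _, fun w hw => (hB w hw).trans (le_max_left _ _)⟩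

variable [MeasurableSpace F] [BorelSpace F] {φ : Measure F} [IsProbabilityMeasure φ]

lemma un_bd (hK : IsCompact K) (hg : Continuous g) {B : ℝ} (hB : ∀ w ∈ K, |g w| ≤ B) (n : ℕ)
    {y : F} (hy : (sl K y).Nonempty) : |un K g n y| ≤ B := by
  rw [abs_le]
  constructor
  · obtain ⟨w, hw⟩ := hy
    have h1 := le_Sup hK hg hw
    have h2 := Sup_le_un hK hg n ⟨w, hw⟩
    linarith [(abs_le.1 (hB w hw.1)).1]
  · refine un_le hK hg n y (hy.mono inter_subset_left) fun w hw => ?_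
    have := (abs_le.1 (hB w hw)).2
    have : 0 ≤ (n : ℝ) * dist y w.2 := by positivity
    linarith

lemma Sup_bd (hK : IsCompact K) (hg : Continuous g) {B : ℝ} (hB : ∀ w ∈ K, |g w| ≤ B)
    {y : F} (hy : (sl K y).Nonempty) : |Sup K g y| ≤ B := by
  obtain ⟨w, hw, e⟩ := exists_Sup hK hg hy
  rw [e]; exact hB w hw.1

lemma Sup_aesm (hK : IsCompact K) (hg : Continuous g) (hy : ∀ᵐ y ∂φ, (sl K y).Nonempty) :
    AEStronglyMeasurable (Sup K g) φ :=
  aestronglyMeasurable_of_tendsto_ae atTop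
    (fun n => (un_cont hK hg n).measurable.aestronglyMeasurable)
    (hy.mono fun y hy => un_tendsto hK hg hy)

lemma Sup_int (hK : IsCompact K) (hg : Continuous g) (hy : ∀ᵐ y ∂φ, (sl K y).Nonempty) :
    Integrable (Sup K g) φ := by
  obtain ⟨B, -, hB⟩ := exists_bd hK hg
  exact Integrable.of_bound (Sup_aesm hK hg hy) B (hy.mono fun y hy => Sup_bd hK hg hB hy)

lemma un_int_tendsto (hK : IsCompact K) (hg : Continuous g) (hy : ∀ᵐ y ∂φ, (sl K y).Nonempty) :
    Tendsto (fun n => ∫ y, un K g n y ∂φ) atTop (𝓝 (∫ y, Sup K g y ∂φ)) := by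
  obtain ⟨B, -, hB⟩ := exists_bd hK hg
  exact tendsto_integral_of_dominated_convergence (fun _ => B)
    (fun n => (un_cont hK hg n).measurable.aestronglyMeasurable) (integrable_const _)
    (fun n => hy.mono fun y hy => un_bd hK hg hB n hy)
    (hy.mono fun y hy => un_tendsto hK hg hy)

lemma final_dct (hK : IsCompact K) (hy : ∀ᵐ y ∂φ, (sl K y).Nonempty) {a f : E × F → ℝ}
    (ha : Continuous a) (hf : Continuous f) (ha0 : ∀ w ∈ K, 0 ≤ a w)
    (hopt : ∀ᵐ y ∂φ, ∀ w ∈ sl K y, f w = - Sup K (fun w => - f w) y → a w = 0) :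
    Tendsto (fun n : ℕ => ∫ y, (Sup K (fun w => a w - n * f w) y
      - n * Sup K (fun w => - f w) y) ∂φ) atTop (𝓝 0) := by
  obtain ⟨B, -, hB⟩ := exists_bd hK ha
  have hnf : Continuous fun w => - f w := by fun_prop
  have hlow : ∀ n : ℕ, ∀ y, (sl K y).Nonempty →
      0 ≤ Sup K (fun w => a w - n * f w) y - n * Sup K (fun w => - f w) y := by
    intro n y hy
    obtain ⟨w, hw, e⟩ := exists_Sup hK hnf hy
    have := le_Sup hK (g := fun w => a w - n * f w) (by fun_prop) hw
    have := ha0 w hw.1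
    rw [e]; linarith
  have hup : ∀ n : ℕ, ∀ y, (sl K y).Nonempty →
      ∃ w ∈ sl K y, Sup K (fun w => a w - n * f w) y - n * Sup K (fun w => - f w) y
        = a w - n * (f w + Sup K (fun w => - f w) y) := by
    intro n y hy
    obtain ⟨w, hw, e⟩ := exists_Sup hK (g := fun w => a w - n * f w) (by fun_prop) hy
    exact ⟨w, hw, by rw [e]; ring⟩
  have hpos : ∀ y, ∀ w ∈ sl K y, 0 ≤ f w + Sup K (fun w => - f w) y := by
    intro y w hw
    have := le_Sup hK hnf hw
    linarith
  have := tendsto_integral_of_dominated_convergence (μ := φ)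
    (F := fun (n : ℕ) y => Sup K (fun w => a w - n * f w) y - n * Sup K (fun w => - f w) y)
    (f := fun _ => (0:ℝ)) (fun _ => B) ?_ (integrable_const _) ?_ ?_
  · simpa using this
  · intro n
    exact (Sup_aesm hK (by fun_prop) hy).sub ((Sup_aesm hK hnf hy).const_mul _)
  · intro n
    filter_upwards [hy] with y hy
    rw [Real.norm_eq_abs, abs_of_nonneg (hlow n y hy)]
    obtain ⟨w, hw, e⟩ := hup n y hy
    rw [e]
    have h1 := mul_nonneg (Nat.cast_nonneg (α := ℝ) n) (hpos y w hw)
    linarith [(abs_le.1 (hB w hw.1)).2]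
  · filter_upwards [hy, hopt] with y hy hopt
    rw [Metric.tendsto_atTop]
    intro ε hε
    obtain ⟨N, hN⟩ := penal (sl_compact hK y) (a := a)
      (b := fun w => f w + Sup K (fun w => - f w) y) ha (by fun_prop) (hpos y)
      (fun w hw h => (hopt w hw (by linarith)).le) (half_pos hε)
    obtain ⟨n0, hn0⟩ := exists_nat_ge N
    refine ⟨n0, fun n hn => ?_⟩
    obtain ⟨w, hw, e⟩ := hup n y hy
    have h1 := hlow n y hy
    have h2 := hN n (hn0.trans (by exact_mod_cast hn)) w hw
    rw [Real.dist_eq, sub_zero, abs_of_nonneg h1, e]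
    linarith
end

lemma sw {p : ℕ} {Y : Set (Fin p → ℝ)} (hY : IsCompact Y) {u : (Fin p → ℝ) → ℝ}
    (hu : Continuous u) {ε : ℝ} (hε : 0 < ε) :
    ∃ q : MvPolynomial (Fin p) ℝ, ∀ y ∈ Y, |eval y q - u y| < ε := by
  have : CompactSpace Y := isCompact_iff_compactSpace.1 hY
  let co : Fin p → C(Y, ℝ) := fun l => ⟨fun y => y.1 l, (continuous_apply l).comp continuous_subtype_val⟩
  let A : Subalgebra ℝ C(Y, ℝ) := (aeval (R := ℝ) co).range
  have hsep : A.SeparatesPoints := by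
    intro y y' hne
    have : ∃ l, y.1 l ≠ y'.1 l := by
      by_contra h
      push Not at h
      exact hne (Subtype.ext (funext h))
    obtain ⟨l, hl⟩ := this
    exact ⟨co l, ⟨co l, ⟨X l, by simp⟩, rfl⟩, hl⟩
  obtain ⟨⟨g, q, hq⟩, hg⟩ := ContinuousMap.exists_mem_subalgebra_near_continuous_of_separatesPoints
    A hsep (fun y : Y => u y.1) (by fun_prop) ε hε
  refine ⟨q, fun y hy => ?_⟩
  have h1 := hg ⟨y, hy⟩
  have h2 : g ⟨y, hy⟩ = eval y q := by
    rw [← hq]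
    have : ∀ q : MvPolynomial (Fin p) ℝ, (aeval (R := ℝ) co q) ⟨y, hy⟩ = eval y q := by
      intro q
      induction q using MvPolynomial.induction_on with
      | C a => simp
      | add p q hp hq => simp [hp, hq]
      | mul_X p i hp => simp [hp, co]
    exact this q
  rw [← h2]
  exact h1

lemma cont_eval {p : ℕ} (q : MvPolynomial (Fin p) ℝ) : Continuous fun y : Fin p → ℝ => eval y q :=
  MvPolynomial.continuous_eval q

lemma poly_int {p : ℕ} {Y : Set (Fin p → ℝ)} (hY : IsCompact Y) {φ : Measure (Fin p → ℝ)}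
    [IsProbabilityMeasure φ] (hφ : ∀ᵐ y ∂φ, y ∈ Y) (q : MvPolynomial (Fin p) ℝ) :
    Integrable (fun y => eval y q) φ := by
  obtain ⟨B, hB⟩ := hY.exists_bound_of_continuousOn (cont_eval q).continuousOn
  exact Integrable.of_bound (cont_eval q).measurable.aestronglyMeasurable B
    (hφ.mono fun y hy => hB y hy)

lemma approx {n p : ℕ} {K : Set ((Fin n → ℝ) × (Fin p → ℝ))} (hK : IsCompact K)
    {Y : Set (Fin p → ℝ)} (hY : IsCompact Y) {φ : Measure (Fin p → ℝ)}
    [IsProbabilityMeasure φ] (hφ : ∀ᵐ y ∂φ, y ∈ Y) (hYK : ∀ y ∈ Y, (sl K y).Nonempty)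
    (hKY : ∀ w ∈ K, w.2 ∈ Y) {g : (Fin n → ℝ) × (Fin p → ℝ) → ℝ} (hg : Continuous g)
    {ε : ℝ} (hε : 0 < ε) :
    ∃ q : MvPolynomial (Fin p) ℝ, (∀ w ∈ K, g w ≤ eval w.2 q) ∧
      ∫ y, eval y q ∂φ ≤ ∫ y, Sup K g y ∂φ + ε := by
  have hy : ∀ᵐ y ∂φ, (sl K y).Nonempty := hφ.mono hYK
  have h1 := (un_int_tendsto hK hg hy).eventually_lt_const
    (show ∫ y, Sup K g y ∂φ < ∫ y, Sup K g y ∂φ + ε / 2 by linarith)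
  obtain ⟨N, hN⟩ := h1.exists
  obtain ⟨q, hq⟩ := sw hY (un_cont hK hg N) (show 0 < ε / 4 by linarith)
  refine ⟨q + C (ε / 4), fun w hw => ?_, ?_⟩
  · have h2 := le_un hK hg N w.2 hw
    have h3 := (abs_lt.1 (hq w.2 (hKY w hw))).1
    simp only [dist_self, mul_zero, sub_zero] at h2
    simp only [map_add, eval_C]
    linarith
  · obtain ⟨B, -, hB⟩ := exists_bd hK hg
    have hint : Integrable (un K g N) φ :=
      Integrable.of_bound (un_cont hK hg N).measurable.aestronglyMeasurable B
        (hy.mono fun y hy => un_bd hK hg hB N hy)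
    have h4 : ∫ y, eval y (q + C (ε / 4)) ∂φ ≤ ∫ y, (un K g N y + ε / 2) ∂φ := by
      apply integral_mono_ae (poly_int hY hφ _) (hint.add (integrable_const _))
      filter_upwards [hφ] with y hy
      have h3 := (abs_lt.1 (hq y hy)).2
      simp only [map_add, eval_C, Pi.add_apply]
      linarith
    rw [integral_add hint (integrable_const _)] at h4
    simp at h4
    simp only [map_add, eval_C]
    linarith

end Aux16
namespace Aux16

section
variable {n p : ℕ}

lemma Lz_sup (z : (Fin n → ℕ) → (Fin p → ℕ) → ℝ) (q : MvPolynomial (Fin n ⊕ Fin p) ℝ)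
    {s : Finset ((Fin n ⊕ Fin p) →₀ ℕ)} (hs : q.support ⊆ s) :
    Lz n p z q = ∑ d ∈ s, q.coeff d * z (fun k => d (Sum.inl k)) (fun l => d (Sum.inr l)) := by
  unfold Lz
  refine Finset.sum_subset hs fun d _ hd => ?_
  rw [MvPolynomial.notMem_support_iff.1 hd, zero_mul]

lemma Lz_add (z : (Fin n → ℕ) → (Fin p → ℕ) → ℝ) (q r : MvPolynomial (Fin n ⊕ Fin p) ℝ) :
    Lz n p z (q + r) = Lz n p z q + Lz n p z r := by
  classical
  rw [Lz_sup z (q + r) (MvPolynomial.support_add),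
    Lz_sup z q (s := q.support ∪ r.support) Finset.subset_union_left,
    Lz_sup z r (s := q.support ∪ r.support) Finset.subset_union_right, ← Finset.sum_add_distrib]
  refine Finset.sum_congr rfl fun d _ => ?_
  rw [coeff_add]; ring

lemma Lz_C_mul (z : (Fin n → ℕ) → (Fin p → ℕ) → ℝ) (c : ℝ)
    (q : MvPolynomial (Fin n ⊕ Fin p) ℝ) :
    Lz n p z (C c * q) = c * Lz n p z q := by
  have hs : (C c * q).support ⊆ q.support := by
    intro d hd
    rw [mem_support_iff, coeff_C_mul] at hd
    rw [mem_support_iff]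
    exact right_ne_zero_of_mul hd
  rw [Lz_sup z (C c * q) hs, Lz, Finset.mul_sum]
  refine Finset.sum_congr rfl fun d _ => ?_
  rw [coeff_C_mul]; ring

lemma Lz_monomial (z : (Fin n → ℕ) → (Fin p → ℕ) → ℝ) (d : (Fin n ⊕ Fin p) →₀ ℕ) (c : ℝ) :
    Lz n p z (monomial d c) = c * z (fun k => d (Sum.inl k)) (fun l => d (Sum.inr l)) := by
  rw [Lz_sup z (monomial d c) (s := {d}) support_monomial_subset]
  simp

lemma Lz_zero (z : (Fin n → ℕ) → (Fin p → ℕ) → ℝ) : Lz n p z 0 = 0 := by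
  simp [Lz]

lemma Lz_sub (z : (Fin n → ℕ) → (Fin p → ℕ) → ℝ) (q r : MvPolynomial (Fin n ⊕ Fin p) ℝ) :
    Lz n p z (q - r) = Lz n p z q - Lz n p z r := by
  have := Lz_add z (q - r) r
  rw [sub_add_cancel] at this; linarith

lemma Lz_one (z : (Fin n → ℕ) → (Fin p → ℕ) → ℝ) :
    Lz n p z 1 = z (fun _ => 0) (fun _ => 0) := by
  have := Lz_monomial z 0 1
  simpa using this

lemma Lz_X (z : (Fin n → ℕ) → (Fin p → ℕ) → ℝ) (k : Fin n) :
    Lz n p z (X (Sum.inl k)) = z (fun j => if j = k then 1 else 0) (fun _ => 0) := by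
  have := Lz_monomial z (Finsupp.single (Sum.inl k) 1) 1
  rw [one_mul] at this
  rw [X, this]
  congr 1
  · funext j
    simp [Finsupp.single_apply, eq_comm]
  · funext l
    simp [Finsupp.single_apply]

/-- the moment sequence of a linear functional -/
def seqOf (L : MvPolynomial (Fin n ⊕ Fin p) ℝ →ₗ[ℝ] ℝ) (α : Fin n → ℕ) (β : Fin p → ℕ) : ℝ :=
  L (monomial (Finsupp.equivFunOnFinite.symm (Sum.elim α β)) 1)

lemma Lz_seqOf (L : MvPolynomial (Fin n ⊕ Fin p) ℝ →ₗ[ℝ] ℝ)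
    (q : MvPolynomial (Fin n ⊕ Fin p) ℝ) : Lz n p (seqOf L) q = L q := by
  induction q using MvPolynomial.induction_on' with
  | monomial d c =>
    rw [Lz_monomial, seqOf]
    have : Finsupp.equivFunOnFinite.symm
        (Sum.elim (fun k => d (Sum.inl k)) (fun l => d (Sum.inr l))) = d := by
      ext i
      rcases i with i | i <;> simp
    rw [this, ← smul_eq_mul, ← L.map_smul, smul_monomial, smul_eq_mul, mul_one]
  | add q r hq hr => rw [Lz_add, hq, hr, map_add]

lemma degOK_of_le {i : ℕ} {q : MvPolynomial (Fin n ⊕ Fin p) ℝ} (h : q.totalDegree ≤ i) :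
    DegOK n p i q := by
  intro d hd
  have h1 := le_totalDegree hd
  rw [Finsupp.sum_fintype _ _ (fun _ => rfl), Fintype.sum_sum_type] at h1
  constructor <;> omega

variable {ι : Type*} [Fintype ι] {H : ι → MvPolynomial (Fin n ⊕ Fin p) ℝ}
  {γ : (Fin p → ℕ) → ℝ}

lemma ev_nonneg {m : MvPolynomial (Fin n ⊕ Fin p) ℝ} (hm : m ∈ QM H) :
    ∃ i0 : ℕ, ∀ i ≥ i0, ∀ z, RelaxFeasible n p H γ i z → 0 ≤ Lz n p z m := by
  induction hm using AddSubmonoid.closure_induction with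
  | mem x hx =>
    rcases hx with ⟨a, rfl⟩ | ⟨j, a, rfl⟩
    · exact ⟨a.totalDegree, fun i hi z hz => hz.1 a (degOK_of_le hi)⟩
    · exact ⟨a.totalDegree + halfDeg (H j), fun i hi z hz =>
        hz.2.1 j a (degOK_of_le (by omega))⟩
  | zero => exact ⟨0, fun i _ z _ => by rw [Lz_zero]⟩
  | add x y _ _ hx hy =>
    obtain ⟨i1, h1⟩ := hx
    obtain ⟨i2, h2⟩ := hy
    refine ⟨max i1 i2, fun i hi z hz => ?_⟩
    rw [Lz_add]
    exact add_nonneg (h1 i ((le_max_left _ _).trans hi) z hz)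
      (h2 i ((le_max_right _ _).trans hi) z hz)

lemma Lz_one_feas (hγ0 : γ (fun _ => 0) = 1) {i : ℕ} {z} (hz : RelaxFeasible n p H γ i z) :
    Lz n p z 1 = 1 := by
  rw [Lz_one, hz.2.2 (fun _ => 0) (by simp), hγ0]

lemma ev_bdd (hb : BddQM H) (hγ0 : γ (fun _ => 0) = 1) (q : MvPolynomial (Fin n ⊕ Fin p) ℝ) :
    ∃ (c : ℝ) (i0 : ℕ), ∀ i ≥ i0, ∀ z, RelaxFeasible n p H γ i z →
      -c ≤ Lz n p z q ∧ Lz n p z q ≤ c := by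
  obtain ⟨c, -, h1, h2⟩ := bdd_all hb q
  obtain ⟨i1, h1⟩ := ev_nonneg (γ := γ) h1
  obtain ⟨i2, h2⟩ := ev_nonneg (γ := γ) h2
  refine ⟨c, max i1 i2, fun i hi z hz => ?_⟩
  have h1 := h1 i ((le_max_left _ _).trans hi) z hz
  have h2 := h2 i ((le_max_right _ _).trans hi) z hz
  have e : Lz n p z (C c) = c := by
    have := Lz_C_mul z c 1
    rw [Lz_one_feas hγ0 hz] at this
    simpa using this
  rw [Lz_sub, e] at h1
  rw [Lz_add, e] at h2
  constructor <;> linarith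

lemma evalXY_cont (q : MvPolynomial (Fin n ⊕ Fin p) ℝ) : Continuous (evalXY n p q) := by
  have : Continuous fun w : (Fin n → ℝ) × (Fin p → ℝ) => (Sum.elim w.1 w.2 : Fin n ⊕ Fin p → ℝ) := by
    refine continuous_pi fun i => ?_
    rcases i with i | i
    · exact (continuous_apply i).comp continuous_fst
    · exact (continuous_apply i).comp continuous_snd
  exact (MvPolynomial.continuous_eval q).comp this

lemma evalXY_inr (u : MvPolynomial (Fin p) ℝ) (w : (Fin n → ℝ) × (Fin p → ℝ)) :
    evalXY n p (rename Sum.inr u) w = eval w.2 u := by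
  rw [evalXY, eval_rename]; rfl

variable {K : Set ((Fin n → ℝ) × (Fin p → ℝ))} {φ : Measure (Fin p → ℝ)} [IsProbabilityMeasure φ]

lemma hahn (hK : IsCompact K) (hy : ∀ᵐ y ∂φ, (sl K y).Nonempty)
    (f : MvPolynomial (Fin n ⊕ Fin p) ℝ) :
    ∃ L : MvPolynomial (Fin n ⊕ Fin p) ℝ →ₗ[ℝ] ℝ,
      L f = - ∫ y, Sup K (fun w => - evalXY n p f w) y ∂φ ∧
      ∀ q, L q ≤ ∫ y, Sup K (evalXY n p q) y ∂φ := by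
  set P : MvPolynomial (Fin n ⊕ Fin p) ℝ → ℝ := fun q => ∫ y, Sup K (evalXY n p q) y ∂φ with hP
  have hPneg : ∫ y, Sup K (fun w => - evalXY n p f w) y ∂φ = P (-f) := by
    have : (fun w => - evalXY n p f w) = evalXY n p (-f) := by
      funext w; simp [evalXY]
    rw [this]
  have hom : ∀ c : ℝ, 0 < c → ∀ q, P (c • q) = c * P q := by
    intro c hc q
    simp only [hP]
    rw [← integral_const_mul]
    apply integral_congr_ae
    filter_upwards [hy] with y hy
    have e : ∀ w, evalXY n p (c • q) w = c * evalXY n p q w := fun w => by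
      simp [evalXY, smul_eval]
    apply le_antisymm
    · refine Sup_le hK (evalXY_cont _) hy fun w hw => ?_
      rw [e]
      exact mul_le_mul_of_nonneg_left (le_Sup hK (evalXY_cont _) hw) hc.le
    · obtain ⟨w, hw, h⟩ := exists_Sup hK (evalXY_cont q) hy
      rw [h, ← e]
      exact le_Sup hK (evalXY_cont _) hw
  have hadd : ∀ q r, P (q + r) ≤ P q + P r := by
    intro q r
    simp only [hP]
    rw [← integral_add (Sup_int hK (evalXY_cont q) hy) (Sup_int hK (evalXY_cont r) hy)]
    apply integral_mono_ae (Sup_int hK (evalXY_cont _) hy)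
      ((Sup_int hK (evalXY_cont q) hy).add (Sup_int hK (evalXY_cont r) hy))
    filter_upwards [hy] with y hy
    refine Sup_le hK (evalXY_cont _) hy fun w hw => ?_
    have e : evalXY n p (q + r) w = evalXY n p q w + evalXY n p r w := by simp [evalXY]
    rw [e]
    exact add_le_add (le_Sup hK (evalXY_cont _) hw) (le_Sup hK (evalXY_cont _) hw)
  have hP0 : P 0 = 0 := by
    have := hom 2 (by norm_num) 0
    rw [smul_zero] at this; linarith
  have hlin : ∀ c : ℝ, c * (- P (-f)) ≤ P (c • f) := by
    intro c
    rcases lt_trichotomy c 0 with hc | rfl | hc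
    · have := hom (-c) (by linarith) (-f)
      rw [smul_neg, neg_smul, neg_neg] at this
      rw [this]; linarith
    · simp [hP0]
    · rw [hom c hc]
      have := hadd f (-f)
      rw [add_neg_cancel, hP0] at this
      exact mul_le_mul_of_nonneg_left (by linarith) hc.le
  have hwd : ∀ c : ℝ, c • f = 0 → (RingHom.id ℝ) c • (- P (-f)) = 0 := by
    intro c hc
    rcases smul_eq_zero.1 hc with rfl | h
    · simp
    · rw [h]; simp [hP0]
  obtain ⟨L, hL1, hL2⟩ := exists_extension_of_le_sublinear
    (LinearPMap.mkSpanSingleton' f (- P (-f)) hwd) P hom hadd (by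
      rintro ⟨x, hx⟩
      obtain ⟨c, rfl⟩ := Submodule.mem_span_singleton.1 hx
      rw [LinearPMap.mkSpanSingleton'_apply]
      exact hlin c)
  refine ⟨L, ?_, hL2⟩
  have hmem : f ∈ (LinearPMap.mkSpanSingleton' f (- P (-f)) hwd).domain :=
    Submodule.mem_span_singleton_self f
  have := hL1 ⟨f, hmem⟩
  rw [LinearPMap.mkSpanSingleton'_apply_self] at this
  rw [hPneg]; exact this

lemma feas_exists (hK : IsCompact K) (hy : ∀ᵐ y ∂φ, (sl K y).Nonempty)
    (hKH : ∀ w ∈ K, ∀ j, 0 ≤ evalXY n p (H j) w)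
    (hγ : ∀ β, γ β = ∫ y, ∏ l, y l ^ β l ∂φ)
    (f : MvPolynomial (Fin n ⊕ Fin p) ℝ) :
    ∃ z, (∀ i, RelaxFeasible n p H γ i z) ∧
      Lz n p z f = - ∫ y, Sup K (fun w => - evalXY n p f w) y ∂φ := by
  obtain ⟨L, hLf, hL⟩ := hahn hK hy f
  have hpos : ∀ q, (∀ w ∈ K, 0 ≤ evalXY n p q w) → 0 ≤ L q := by
    intro q hq
    have h1 := hL (-q)
    have h2 : ∫ y, Sup K (evalXY n p (-q)) y ∂φ ≤ 0 := by
      apply integral_nonpos_of_ae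
      filter_upwards [hy] with y hy
      refine Sup_le hK (evalXY_cont _) hy fun w hw => ?_
      have := hq w hw.1
      simp only [evalXY, map_neg] at this ⊢
      simpa using this
    rw [map_neg] at h1
    linarith
  refine ⟨seqOf L, fun i => ⟨fun q _ => ?_, fun j q _ => ?_, fun β _ => ?_⟩, ?_⟩
  · rw [Lz_seqOf]
    refine hpos _ fun w _ => ?_
    simp only [evalXY, map_pow]; positivity
  · rw [Lz_seqOf]
    refine hpos _ fun w hw => ?_
    have := hKH w hw j
    simp only [evalXY, map_pow, map_mul] at this ⊢; positivity
  · set q : MvPolynomial (Fin n ⊕ Fin p) ℝ :=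
      monomial (Finsupp.equivFunOnFinite.symm (Sum.elim (fun _ => 0) β)) 1 with hq
    have hev : ∀ w, evalXY n p q w = ∏ l, w.2 l ^ β l := by
      intro w
      rw [hq, evalXY, eval_monomial, Finsupp.prod_fintype _ _ (by simp), Fintype.prod_sum_type]
      simp
    have h1 := hL q
    have h2 := hL (-q)
    have e1 : ∫ y, Sup K (evalXY n p q) y ∂φ = γ β := by
      rw [hγ]
      apply integral_congr_ae
      filter_upwards [hy] with y hy
      obtain ⟨w, hw, h⟩ := exists_Sup hK (evalXY_cont q) hy
      rw [h, hev, hw.2]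
    have e2 : ∫ y, Sup K (evalXY n p (-q)) y ∂φ = - γ β := by
      rw [hγ, ← integral_neg]
      apply integral_congr_ae
      filter_upwards [hy] with y hy
      obtain ⟨w, hw, h⟩ := exists_Sup hK (evalXY_cont (-q)) hy
      rw [h]
      have : evalXY n p (-q) w = - evalXY n p q w := by simp [evalXY]
      rw [this, hev, hw.2]
    rw [e1] at h1
    rw [e2, map_neg] at h2
    have : seqOf L (fun _ => 0) β = L q := rfl
    rw [this]; linarith
  · rw [Lz_seqOf, hLf]

lemma Lz_inr {Y : Set (Fin p → ℝ)} (hY : IsCompact Y) (hφ : ∀ᵐ y ∂φ, y ∈ Y)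
    (hγ : ∀ β, γ β = ∫ y, ∏ l, y l ^ β l ∂φ) (u : MvPolynomial (Fin p) ℝ) :
    ∃ i0 : ℕ, ∀ i ≥ i0, ∀ z, RelaxFeasible n p H γ i z →
      Lz n p z (rename Sum.inr u) = ∫ y, eval y u ∂φ := by
  induction u using MvPolynomial.induction_on' with
  | monomial d c =>
    refine ⟨∑ l, d l, fun i hi z hz => ?_⟩
    rw [rename_monomial, Lz_monomial]
    have e1 : (fun k : Fin n => (Finsupp.mapDomain (Sum.inr : Fin p → Fin n ⊕ Fin p) d) (Sum.inl k))
        = fun _ => 0 := by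
      funext k
      exact Finsupp.mapDomain_notin_range _ _ (by simp)
    have e2 : (fun l : Fin p => (Finsupp.mapDomain (Sum.inr : Fin p → Fin n ⊕ Fin p) d) (Sum.inr l))
        = fun l => d l := by
      funext l
      exact Finsupp.mapDomain_apply Sum.inr_injective _ _
    rw [e1, e2, hz.2.2 (fun l => d l) (by omega), hγ, ← integral_const_mul]
    congr 1
    funext y
    rw [eval_monomial, Finsupp.prod_fintype _ _ (by simp)]
  | add q r hq hr =>
    obtain ⟨i1, h1⟩ := hq
    obtain ⟨i2, h2⟩ := hr
    refine ⟨max i1 i2, fun i hi z hz => ?_⟩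
    rw [map_add, Lz_add, h1 i ((le_max_left _ _).trans hi) z hz,
      h2 i ((le_max_right _ _).trans hi) z hz, ← integral_add (poly_int hY hφ _) (poly_int hY hφ _)]
    simp only [map_add]

theorem main_conv (hb : BddQM H) {Y : Set (Fin p → ℝ)} (hY : IsCompact Y) (hφ : ∀ᵐ y ∂φ, y ∈ Y)
    (hK : IsCompact K) (hYK : ∀ y ∈ Y, (sl K y).Nonempty) (hKY : ∀ w ∈ K, w.2 ∈ Y)
    (hKH : ∀ w, w ∈ K ↔ ∀ j, 0 ≤ evalXY n p (H j) w)
    (hγ : ∀ β, γ β = ∫ y, ∏ l, y l ^ β l ∂φ)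
    (f a : MvPolynomial (Fin n ⊕ Fin p) ℝ)
    (ha0 : ∀ w ∈ K, 0 ≤ evalXY n p a w)
    (hopt : ∀ᵐ y ∂φ, ∀ w ∈ sl K y, evalXY n p f w = - Sup K (fun w => - evalXY n p f w) y →
      evalXY n p a w = 0)
    (zi : ℕ → (Fin n → ℕ) → (Fin p → ℕ) → ℝ) (i00 : ℕ)
    (hzi : ∀ i, i00 ≤ i → RelaxFeasible n p H γ i (zi i) ∧
      Lz n p (zi i) f ≤ rhoSDP n p H γ f i + 1 / (i : ℝ)) :
    Tendsto (fun i => Lz n p (zi i) a) atTop (𝓝 0) := by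
  have hy : ∀ᵐ y ∂φ, (sl K y).Nonempty := hφ.mono hYK
  have hγ0 : γ (fun _ => 0) = 1 := by rw [hγ]; simp
  rw [tendsto_iff_ultrafilter]
  intro U hU
  have hev : ∀ i0 : ℕ, ∀ᶠ i in (U : Filter ℕ), i0 ≤ i := fun i0 => hU (eventually_ge_atTop i0)
  have hlim : ∀ q, ∃ l, Tendsto (fun i => Lz n p (zi i) q) U (𝓝 l) := by
    intro q
    obtain ⟨c, i0, h⟩ := ev_bdd hb hγ0 q
    have : Icc (-c) c ∈ U.map (fun i => Lz n p (zi i) q) := by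
      rw [Ultrafilter.mem_map]
      filter_upwards [hev i0, hev i00] with i h1 h2
      exact h i h1 _ (hzi i h2).1
    obtain ⟨l, -, hl⟩ := isCompact_Icc.ultrafilter_le_nhds _ (le_principal_iff.2 this)
    exact ⟨l, hl⟩
  choose F hF using hlim
  have hFS : F ∈ St H := by
    refine ⟨fun q r => ?_, fun c q => ?_, ?_, fun m hm => ?_⟩
    · refine tendsto_nhds_unique (hF (q + r)) ?_
      simp only [Lz_add]
      exact (hF q).add (hF r)
    · refine tendsto_nhds_unique (hF (C c * q)) ?_
      simp only [Lz_C_mul]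
      exact (hF q).const_mul c
    · refine tendsto_nhds_unique (hF 1) (tendsto_const_nhds.congr' ?_)
      filter_upwards [hev i00] with i hi
      exact (Lz_one_feas hγ0 (hzi i hi).1).symm
    · obtain ⟨i0, h⟩ := ev_nonneg (γ := γ) hm
      refine ge_of_tendsto (hF m) ?_
      filter_upwards [hev i0, hev i00] with i h1 h2
      exact h i h1 _ (hzi i h2).1
  have hFu : ∀ u : MvPolynomial (Fin p) ℝ, F (rename Sum.inr u) = ∫ y, eval y u ∂φ := by
    intro u
    obtain ⟨i0, h⟩ := Lz_inr (n := n) (H := H) hY hφ hγ u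
    refine tendsto_nhds_unique (hF _) (tendsto_const_nhds.congr' ?_)
    filter_upwards [hev i0, hev i00] with i h1 h2
    exact (h i h1 _ (hzi i h2).1).symm
  have hpos : ∀ q, (∀ w ∈ K, 0 ≤ evalXY n p q w) → 0 ≤ F q := by
    intro q hq
    refine putinar_dual hb hFS q fun v hv => ?_
    have e : (Sum.elim (fun k => v (Sum.inl k)) (fun l => v (Sum.inr l))) = v := by
      funext i; rcases i with i | i <;> rfl
    have h1 := hq (fun k => v (Sum.inl k), fun l => v (Sum.inr l)) ((hKH _).2 fun j => by
      simp only [evalXY, e]; exact hv j)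
    simpa only [evalXY, e] using h1
  have hFf : F f ≤ - ∫ y, Sup K (fun w => - evalXY n p f w) y ∂φ := by
    obtain ⟨z, hz, hzf⟩ := feas_exists hK hy (fun w hw => (hKH w).1 hw) hγ f
    obtain ⟨c, i0, hc⟩ := ev_bdd hb hγ0 f
    have hlim2 : Tendsto (fun i : ℕ => - ∫ y, Sup K (fun w => - evalXY n p f w) y ∂φ + 1 / (i : ℝ))
        U (𝓝 (- ∫ y, Sup K (fun w => - evalXY n p f w) y ∂φ + 0)) :=
      (tendsto_const_nhds.add tendsto_one_div_atTop_nhds_zero_nat).mono_left hU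
    rw [add_zero] at hlim2
    refine le_of_tendsto_of_tendsto (hF f) hlim2 ?_
    filter_upwards [hev i0, hev i00] with i h1 h2
    refine (hzi i h2).2.trans (add_le_add_left ?_ _)
    rw [← hzf]
    refine csInf_le ⟨-c, ?_⟩ ⟨z, hz i, rfl⟩
    rintro _ ⟨z', hz', rfl⟩
    exact (hc i h1 z' hz').1
  have hle : ∀ N : ℕ, F a ≤ ∫ y, (Sup K (fun w => evalXY n p a w - N * evalXY n p f w) y
      - N * Sup K (fun w => - evalXY n p f w) y) ∂φ := by
    intro N
    have hc : Continuous fun w => evalXY n p a w - N * evalXY n p f w :=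
      (evalXY_cont a).sub ((evalXY_cont f).const_mul _)
    have hnf : Continuous fun w => - evalXY n p f w := (evalXY_cont f).neg
    rw [integral_sub (Sup_int hK hc hy) ((Sup_int hK hnf hy).const_mul _), integral_const_mul]
    refine le_of_forall_pos_le_add fun ε hε => ?_
    obtain ⟨u, hu1, hu2⟩ := approx hK hY hφ hYK hKY hc hε
    have h1 := hpos (rename Sum.inr u - (a - C (N : ℝ) * f)) (fun w hw => by
      have h2 := hu1 w hw
      rw [← evalXY_inr (n := n) u w] at h2
      simp only [evalXY, map_sub, map_mul, eval_C] at h2 ⊢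
      linarith)
    rw [St_sub hFS, St_sub hFS, hFS.2.1, hFu] at h1
    have h3 := mul_le_mul_of_nonneg_left hFf (Nat.cast_nonneg (α := ℝ) N)
    linarith
  have h0 := ge_of_tendsto' (final_dct hK hy (evalXY_cont a) (evalXY_cont f) ha0 hopt) hle
  have : F a = 0 := le_antisymm h0 (hpos a ha0)
  rw [← this]
  exact hF a

end
end Aux16

/-- necessary conditions for persistency of a boolean variable `x_k`. -/
theorem stmt16 (n p m s : ℕ)
    (f : MvPolynomial (Fin n ⊕ Fin p) ℝ)
    (hx : Fin m → MvPolynomial (Fin n ⊕ Fin p) ℝ)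
    (hy : Fin s → MvPolynomial (Fin p) ℝ)
    (H : Fin m ⊕ Fin s → MvPolynomial (Fin n ⊕ Fin p) ℝ)
    (hH : H = Sum.elim hx (fun k => rename Sum.inr (hy k)))
    (Y : Set (Fin p → ℝ)) (hYdef : Y = {y | ∀ k, 0 ≤ eval y (hy k)}) (hYc : IsCompact Y)
    (K : Set ((Fin n → ℝ) × (Fin p → ℝ)))
    (hKdef : K = {w | w.2 ∈ Y ∧ ∀ j, 0 ≤ evalXY n p (hx j) w}) (hKc : IsCompact K)
    (Ky : (Fin p → ℝ) → Set (Fin n → ℝ))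
    (hKy : ∀ y, Ky y = {x | ∀ j, 0 ≤ eval (Sum.elim x y) (hx j)})
    (hne : ∀ y ∈ Y, (Ky y).Nonempty)
    (harch : ArchimedeanQM n p H)
    (φ : Measure (Fin p → ℝ)) [IsProbabilityMeasure φ] (hφY : φ Yᶜ = 0)
    (γ : (Fin p → ℕ) → ℝ)
    (hγ : ∀ β, γ β = ∫ y in Y, ∏ l, y l ^ β l ∂φ)
    (J : (Fin p → ℝ) → ℝ)
    (hJ : ∀ y, J y = sInf ((fun x => evalXY n p f (x, y)) '' Ky y))
    (Xstar : (Fin p → ℝ) → Set (Fin n → ℝ))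
    (hXs : ∀ y, Xstar y = {x ∈ Ky y | evalXY n p f (x, y) = J y})
    (k : Fin n)
    (j1 : Fin m) (hj1 : hx j1 = X (Sum.inl k) ^ 2 - X (Sum.inl k))
    (j2 : Fin m) (hj2 : hx j2 = X (Sum.inl k) - X (Sum.inl k) ^ 2)
    (zi : ℕ → (Fin n → ℕ) → (Fin p → ℕ) → ℝ)
    (hzi : ∀ i, iZero n p H f ≤ i →
      RelaxFeasible n p H γ i (zi i) ∧
      Lz n p (zi i) f ≤ rhoSDP n p H γ f i + 1 / (i : ℝ)) :
    ((∀ᵐ y ∂φ, ∀ x ∈ Xstar y, x k = 1) →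
      Tendsto (fun i => zi i (fun j => if j = k then 1 else 0) (fun _ => 0))
        atTop (𝓝 1)) ∧
    ((∀ᵐ y ∂φ, ∀ x ∈ Xstar y, x k = 0) →
      Tendsto (fun i => zi i (fun j => if j = k then 1 else 0) (fun _ => 0))
        atTop (𝓝 0)) := by
  have hb : Aux16.BddQM H := Aux16.arch_bdd harch
  have hφ : ∀ᵐ y ∂φ, y ∈ Y := hφY
  have hres : φ.restrict Y = φ := Measure.restrict_eq_self_of_ae_mem hφ
  rw [hres] at hγ
  have hmem : ∀ x y, y ∈ Y → ((x, y) ∈ K ↔ x ∈ Ky y) := by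
    intro x y hy
    rw [hKdef, hKy]
    exact ⟨fun h => h.2, fun h => ⟨hy, h⟩⟩
  have hYK : ∀ y ∈ Y, (Aux16.sl K y).Nonempty := by
    intro y hy
    obtain ⟨x, hx⟩ := hne y hy
    exact ⟨(x, y), (hmem x y hy).2 hx, rfl⟩
  have hKY : ∀ w ∈ K, w.2 ∈ Y := by
    intro w hw
    rw [hKdef] at hw
    exact hw.1
  have hKH : ∀ w, w ∈ K ↔ ∀ j, 0 ≤ evalXY n p (H j) w := by
    intro w
    rw [hKdef, hYdef, hH]
    constructor
    · rintro ⟨h1, h2⟩ (j | j)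
      · exact h2 j
      · rw [Sum.elim_inr, Aux16.evalXY_inr]; exact h1 j
    · intro h
      refine ⟨fun j => ?_, fun j => h (Sum.inl j)⟩
      have := h (Sum.inr j)
      rwa [Sum.elim_inr, Aux16.evalXY_inr] at this
  have hbool : ∀ w ∈ K, w.1 k = 0 ∨ w.1 k = 1 := by
    intro w hw
    rw [hKdef] at hw
    have h1 := hw.2 j1
    have h2 := hw.2 j2
    rw [hj1] at h1
    rw [hj2] at h2
    simp only [evalXY, map_sub, map_pow, eval_X, Sum.elim_inl] at h1 h2
    have : w.1 k * (w.1 k - 1) = 0 := by nlinarith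
    rcases mul_eq_zero.1 this with h | h
    · exact Or.inl h
    · exact Or.inr (by linarith)
  have hnf : Continuous fun w => - evalXY n p f w := (Aux16.evalXY_cont f).neg
  have hstar : ∀ y ∈ Y, ∀ w ∈ Aux16.sl K y,
      evalXY n p f w = - Aux16.Sup K (fun w => - evalXY n p f w) y → w.1 ∈ Xstar y := by
    rintro y hy ⟨x, y'⟩ ⟨hw, hwy⟩ h
    have hwy : y' = y := hwy
    subst hwy
    rw [hXs]
    refine ⟨(hmem x y' hy).1 hw, ?_⟩
    rw [hJ]
    have hl : IsLeast ((fun x => evalXY n p f (x, y')) '' Ky y') (evalXY n p f (x, y')) := by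
      refine ⟨⟨x, (hmem x y' hy).1 hw, rfl⟩, ?_⟩
      rintro _ ⟨x', hx', rfl⟩
      have := Aux16.le_Sup hKc hnf (y := y') (w := (x', y')) ⟨(hmem x' y' hy).2 hx', rfl⟩
      show evalXY n p f (x, y') ≤ evalXY n p f (x', y')
      linarith
    exact hl.csInf_eq.symm
  constructor
  · intro h1
    have := Aux16.main_conv hb hYc hφ hKc hYK hKY hKH hγ f (1 - X (Sum.inl k)) (fun w hw => by
        simp only [evalXY, map_sub, map_one, eval_X, Sum.elim_inl]
        rcases hbool w hw with h | h <;> rw [h] <;> norm_num) (by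
        filter_upwards [h1, hφ] with y h1 hy w hw hopt
        simp only [evalXY, map_sub, map_one, eval_X, Sum.elim_inl]
        rw [h1 _ (hstar y hy w hw hopt)]; norm_num) zi _ hzi
    have h2 : Tendsto (fun i => 1 - Lz n p (zi i) (1 - X (Sum.inl k))) atTop (𝓝 (1 - 0)) :=
      tendsto_const_nhds.sub this
    rw [sub_zero] at h2
    refine h2.congr' ?_
    filter_upwards [eventually_ge_atTop (iZero n p H f)] with i hi
    rw [Aux16.Lz_sub, Aux16.Lz_X, Aux16.Lz_one_feas (by rw [hγ]; simp) (hzi i hi).1]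
    ring
  · intro h1
    have := Aux16.main_conv hb hYc hφ hKc hYK hKY hKH hγ f (X (Sum.inl k)) (fun w hw => by
        simp only [evalXY, eval_X, Sum.elim_inl]
        rcases hbool w hw with h | h <;> rw [h]; norm_num) (by
        filter_upwards [h1, hφ] with y h1 hy w hw hopt
        simp only [evalXY, eval_X, Sum.elim_inl]
        rw [h1 _ (hstar y hy w hw hopt)]) zi _ hzi
    simpa only [Aux16.Lz_X] using this
end
end

section
/- Under the polynomial parametric setting and the Archimedean assumption, assume K_y is nonempty for every y ∈ Y, that for some index k the description of K includes the boolean constraint x_k² − x_k = 0, and that for φ-almost all y ∈ Y the value J(y) is attained at a unique minimizer x*(y). For each i ≥ i_0 let z^i be a nearly optimal feasible solution of the i-th semidefinite relaxation with L_{z^i}(f) ≤ ρ_i + 1/i. Then lim_{i→∞} z^i_{e(k)0} = φ({ y ∈ Y : x*_k(y) = 1 }); consequently x*_k(y) = 1 for φ-almost all y ∈ Y if and only if lim_{i→∞} z^i_{e(k)0} = 1, and x*_k(y) = 0 for φ-almost all y ∈ Y if and only if lim_{i→∞} z^i_{e(k)0} = 0. -/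
open MeasureTheory MvPolynomial Filter Topology Set

noncomputable section

section moment
variable {σ : Type*}

lemma aux_cs (M : MvPolynomial σ ℝ →ₗ[ℝ] ℝ) (hM : ∀ p, 0 ≤ M (p ^ 2)) (a b : MvPolynomial σ ℝ) :
    M (a * b) ^ 2 ≤ M (a ^ 2) * M (b ^ 2) := by
  have h : ∀ t : ℝ, 0 ≤ M (a ^ 2) * (t * t) + (2 * M (a * b)) * t + M (b ^ 2) := by
    intro t
    have h1 := hM (t • a + b)
    have h2 : (t • a + b) ^ 2 = (t * t) • a ^ 2 + (2 * t) • (a * b) + b ^ 2 := by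
      simp only [MvPolynomial.smul_eq_C_mul, map_mul, map_ofNat]
      ring
    rw [h2] at h1
    simp only [map_add, map_smul, smul_eq_mul] at h1
    linarith
  have := discrim_le_zero h
  unfold discrim at this
  nlinarith

lemma aux_growth (M : MvPolynomial σ ℝ →ₗ[ℝ] ℝ) (hM : ∀ p, 0 ≤ M (p ^ 2))
    (w p : MvPolynomial σ ℝ) (R : ℝ) (hR : 0 < R) (B : ℝ)
    (hB : ∀ l : ℕ, M ((w ^ l * p) ^ 2) ≤ B * R ^ l) :
    M ((w * p) ^ 2) ≤ R * M (p ^ 2) := by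
  by_contra hcon
  push Not at hcon
  set a : ℕ → ℝ := fun l => M ((w ^ l * p) ^ 2) with ha
  have ha0 : ∀ l, 0 ≤ a l := fun l => hM _
  have hlog : ∀ l, a (l + 1) ^ 2 ≤ a l * a (l + 2) := by
    intro l
    have := aux_cs M hM (w ^ l * p) (w ^ (l + 2) * p)
    have e : (w ^ l * p) * (w ^ (l + 2) * p) = (w ^ (l + 1) * p) ^ 2 := by ring
    rw [e] at this
    exact this
  have h1 : R * a 0 < a 1 := by simpa [ha] using hcon
  have hp0 : 0 < a 0 := by
    rcases (ha0 0).lt_or_eq with h | h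
    · exact h
    · exfalso
      have := hlog 0
      rw [← h] at this h1
      simp at this h1
      rw [this] at h1
      exact lt_irrefl _ h1
  set r := a 1 / a 0 with hr
  have hrR : R < r := by rw [hr, lt_div_iff₀ hp0]; exact h1
  have hr0 : 0 < r := hR.trans hrR
  have hstep : ∀ l, 0 < a l ∧ r * a l ≤ a (l + 1) := by
    intro l
    induction l with
    | zero => exact ⟨hp0, by rw [hr]; field_simp; exact le_refl _⟩
    | succ l ih =>
      obtain ⟨i1, i2⟩ := ih
      have hpos : 0 < a (l + 1) := lt_of_lt_of_le (mul_pos hr0 i1) i2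
      refine ⟨hpos, ?_⟩
      have h3 := hlog l
      have h4 : a l * (r * a (l + 1)) ≤ a l * a (l + 2) := by nlinarith
      exact le_of_mul_le_mul_left h4 i1
  have hgeo : ∀ l, r ^ l * a 0 ≤ a l := by
    intro l
    induction l with
    | zero => simp
    | succ l ih =>
      have := (hstep l).2
      calc r ^ (l + 1) * a 0 = r * (r ^ l * a 0) := by ring
        _ ≤ r * a l := by gcongr
        _ ≤ _ := this
  have hlim := tendsto_pow_atTop_atTop_of_one_lt (r := r / R) (by rwa [lt_div_iff₀ hR, one_mul])
  obtain ⟨l, hl⟩ := (hlim.eventually_gt_atTop (B / a 0)).exists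
  have h5 := (hgeo l).trans (hB l)
  rw [div_pow, div_lt_div_iff₀ hp0 (pow_pos hR l)] at hl
  linarith

/-- nonnegativity on the quadratic module generated by `G`. -/
def ClG (G : Set (MvPolynomial σ ℝ)) (L : MvPolynomial σ ℝ →ₗ[ℝ] ℝ) : Prop :=
  ∀ g ∈ G, ∀ p, 0 ≤ L (g * p ^ 2)

/-- archimedean bound -/
def BdG (G : Set (MvPolynomial σ ℝ)) (R : ℝ) : Prop :=
  ∀ L, ClG G L → ∀ i p, L ((X i * p) ^ 2) ≤ R ^ 2 * L (p ^ 2)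

variable {G : Set (MvPolynomial σ ℝ)} {R : ℝ}

lemma ClG.sq {L : MvPolynomial σ ℝ →ₗ[ℝ] ℝ} (h : ClG G L) (h1 : 1 ∈ G) (p) : 0 ≤ L (p ^ 2) := by
  simpa using h 1 h1 p

lemma aux_g (h1 : 1 ∈ G) (hR : 0 < R) (hB : BdG G R) {L : MvPolynomial σ ℝ →ₗ[ℝ] ℝ}
    (hL : ClG G L) {g} (hg : g ∈ G) (i : σ) (p) :
    L (g * (X i * p) ^ 2) ≤ R ^ 2 * L (g * p ^ 2) := by
  have hsq := hL.sq h1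
  have hpow : ∀ l : ℕ, ∀ q, L ((X i ^ l * q) ^ 2) ≤ (R ^ 2) ^ l * L (q ^ 2) := by
    intro l q
    induction l with
    | zero => simp
    | succ l ih =>
      have e : X i ^ (l + 1) * q = X i * (X i ^ l * q) := by ring
      rw [e]
      calc _ ≤ R ^ 2 * L ((X i ^ l * q) ^ 2) := hB L hL i _
        _ ≤ R ^ 2 * ((R ^ 2) ^ l * L (q ^ 2)) := by gcongr
        _ = _ := by ring
  let M := L.comp (LinearMap.mulLeft ℝ g)
  have hMe : ∀ q, M q = L (g * q) := fun q => rfl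
  have := aux_growth M (fun q => hL g hg q) (X i) p (R ^ 2) (by positivity)
    (1 + L (1 ^ 2) * L ((g * p ^ 2) ^ 2)) (by
      intro l
      rw [hMe]
      have e : g * (X i ^ l * p) ^ 2 = (X i ^ (2 * l) * 1) * (g * p ^ 2) := by ring
      have c := aux_cs L hsq (X i ^ (2 * l) * 1) (g * p ^ 2)
      rw [← e] at c
      have d := hpow (2 * l) 1
      have n1 := hsq 1
      have n2 := hsq (g * p ^ 2)
      set b := L (1 ^ 2) * L ((g * p ^ 2) ^ 2) with hb
      have hb0 : 0 ≤ b := mul_nonneg n1 n2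
      refine (le_abs_self _).trans (abs_le_of_sq_le_sq ?_ (by positivity))
      calc _ ≤ _ := c
        _ ≤ ((R ^ 2) ^ (2 * l) * L (1 ^ 2)) * L ((g * p ^ 2) ^ 2) := by gcongr
        _ = b * ((R ^ 2) ^ l) ^ 2 := by rw [hb]; ring
        _ ≤ (1 + b) ^ 2 * ((R ^ 2) ^ l) ^ 2 := by
          gcongr; nlinarith
        _ = _ := by ring)
  simpa [hMe] using this

lemma aux_shift (h1 : 1 ∈ G) (hR : 0 < R) (hB : BdG G R) {L : MvPolynomial σ ℝ →ₗ[ℝ] ℝ}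
    (hL : ClG G L) (i : σ) (ε : ℝ) (hε : ε ^ 2 = 1) :
    ClG G (L.comp (LinearMap.mulLeft ℝ (C (R + 1) + C ε * X i))) := by
  intro g hg p
  have ha := aux_g h1 hR hB hL hg i p
  have hb := hL g hg ((C R + C ε * X i) * p)
  have hc := hL g hg p
  have e : (C (R + 1) + C ε * X i) * (g * p ^ 2) = g * p ^ 2 + (2 * R)⁻¹ •
      (g * ((C R + C ε * X i) * p) ^ 2 + ((R ^ 2) • (g * p ^ 2) - g * (X i * p) ^ 2)) := by
    have e2 : (C ε : MvPolynomial σ ℝ) ^ 2 = 1 := by rw [← map_pow, hε, map_one]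
    have e3 : (C R + C ε * X i : MvPolynomial σ ℝ) ^ 2 + (C R ^ 2 - X i ^ 2)
        = (2 * R) • (C R + C ε * X i) := by
      rw [smul_eq_C_mul, map_mul, map_ofNat]
      linear_combination (X i ^ 2) * e2
    have e4 : (g * ((C R + C ε * X i) * p) ^ 2 + ((R ^ 2) • (g * p ^ 2) - g * (X i * p) ^ 2))
        = (2 * R) • ((C R + C ε * X i) * (g * p ^ 2)) := by
      rw [smul_eq_C_mul, smul_eq_C_mul] at *
      rw [map_pow]
      linear_combination (g * p ^ 2) * e3
    rw [e4, smul_smul, inv_mul_cancel₀ (by positivity), one_smul, map_add, map_one]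
    ring
  rw [LinearMap.comp_apply, LinearMap.mulLeft_apply, e]
  simp only [map_add, map_smul, map_sub, smul_eq_mul]
  have : 0 ≤ (2 * R)⁻¹ := by positivity
  have := mul_nonneg this (show 0 ≤ (L (g * ((C R + C ε * X i) * p) ^ 2) + (R ^ 2 * L (g * p ^ 2) - L (g * (X i * p) ^ 2))) by linarith)
  linarith

lemma aux_bound (h1 : 1 ∈ G) (hB : BdG G R) (q : MvPolynomial σ ℝ) :
    ∃ B : ℝ, ∀ L, ClG G L → L 1 = 1 → L (q ^ 2) ≤ B := by
  induction q using MvPolynomial.induction_on with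
  | C a =>
    refine ⟨a ^ 2, fun L hL h => ?_⟩
    have : (C a : MvPolynomial σ ℝ) ^ 2 = (a ^ 2) • 1 := by rw [smul_eq_C_mul, map_pow, mul_one]
    rw [this, map_smul, h]; simp
  | add p q hp hq =>
    obtain ⟨B1, hB1⟩ := hp
    obtain ⟨B2, hB2⟩ := hq
    refine ⟨2 * B1 + 2 * B2, fun L hL h => ?_⟩
    have a1 := hB1 L hL h
    have a2 := hB2 L hL h
    have a3 := hL.sq h1 (p - q)
    have e : (p + q) ^ 2 = (2 : ℝ) • p ^ 2 + (2 : ℝ) • q ^ 2 - (p - q) ^ 2 := by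
      simp only [smul_eq_C_mul, map_ofNat]; ring
    rw [e]
    simp only [map_add, map_smul, map_sub, smul_eq_mul]
    linarith
  | mul_X p i hp =>
    obtain ⟨B, hB'⟩ := hp
    refine ⟨R ^ 2 * B, fun L hL h => ?_⟩
    rw [mul_comm]
    exact (hB L hL i p).trans (mul_le_mul_of_nonneg_left (hB' L hL h) (by positivity))

/-- the state space -/
def StG (G : Set (MvPolynomial σ ℝ)) : Set (MvPolynomial σ ℝ → ℝ) :=
  {F | ∃ L : MvPolynomial σ ℝ →ₗ[ℝ] ℝ, ClG G L ∧ L 1 = 1 ∧ F = L}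

lemma StG_eq : StG G = {F | (∀ a b, F (a + b) = F a + F b) ∧ (∀ (c : ℝ) a, F (c • a) = c * F a) ∧
    (∀ g ∈ G, ∀ p, 0 ≤ F (g * p ^ 2)) ∧ F 1 = 1} := by
  ext F
  constructor
  · rintro ⟨L, h1, h2, rfl⟩
    exact ⟨fun a b => map_add _ _ _, fun a b => by simp, h1, h2⟩
  · rintro ⟨h1, h2, h3, h4⟩
    exact ⟨{ toFun := F, map_add' := h1, map_smul' := h2 }, h3, h4, rfl⟩

lemma StG_closed : IsClosed (StG G) := by
  rw [StG_eq]
  simp only [ofPred_and, ofPred_forall]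
  refine IsClosed.inter ?_ (IsClosed.inter ?_ (IsClosed.inter ?_ ?_))
  · exact isClosed_iInter fun a => isClosed_iInter fun b => isClosed_eq (by fun_prop) (by fun_prop)
  · exact isClosed_iInter fun a => isClosed_iInter fun b => isClosed_eq (by fun_prop) (by fun_prop)
  · exact isClosed_iInter fun a => isClosed_iInter fun b => isClosed_iInter fun c =>
      isClosed_le (by fun_prop) (by fun_prop)
  · exact isClosed_eq (by fun_prop) (by fun_prop)

lemma StG_convex : Convex ℝ (StG G) := by
  rintro F ⟨L, h1, h2, rfl⟩ F' ⟨L', h1', h2', rfl⟩ a b ha hb hab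
  refine ⟨a • L + b • L', ?_, ?_, ?_⟩
  · intro g hg p
    simp only [LinearMap.add_apply, LinearMap.smul_apply, smul_eq_mul]
    exact add_nonneg (mul_nonneg ha (h1 g hg p)) (mul_nonneg hb (h1' g hg p))
  · simp [h2, h2', hab]
  · ext; simp

lemma StG_compact (h1 : 1 ∈ G) (hB : BdG G R) : IsCompact (StG G) := by
  choose B hB' using aux_bound h1 hB
  refine IsCompact.of_isClosed_subset
    (isCompact_univ_pi (s := fun q => Icc (-(1 + B q)) (1 + B q)) fun q => isCompact_Icc)
    StG_closed ?_
  rintro F ⟨L, hL, h, rfl⟩ q -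
  have c := aux_cs L (hL.sq h1) q 1
  have d := hB' q L hL h
  have d0 := hL.sq h1 q
  rw [mul_one, one_pow, h, mul_one] at c
  have : |L q| ≤ 1 + B q := abs_le_of_sq_le_sq (by nlinarith) (by linarith)
  exact abs_le.1 this

lemma StG_ext (h1 : 1 ∈ G) (hR : 0 < R) (hB : BdG G R) {F} (hF : F ∈ (StG G).extremePoints ℝ) :
    ∃ c : σ → ℝ, (∀ g ∈ G, 0 ≤ eval c g) ∧ ∀ q, F q = eval c q := by
  obtain ⟨⟨L, hL, hL1, rfl⟩, hext⟩ := hF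
  have key : ∀ i q, L (X i * q) = L (X i) * L q := by
    intro i q
    set u : MvPolynomial σ ℝ := C (R + 1) + C 1 * X i with hu
    set v : MvPolynomial σ ℝ := C (R + 1) + C (-1) * X i with hv
    have hLu := aux_shift h1 hR hB hL i 1 (by norm_num)
    have hLv := aux_shift h1 hR hB hL i (-1) (by norm_num)
    have hx : (L (X i)) ^ 2 ≤ R ^ 2 := by
      have c := aux_cs L (hL.sq h1) (X i) 1
      have d := hB L hL i 1
      rw [mul_one, one_pow, hL1, mul_one] at *
      linarith
    have hx' := abs_le.1 (abs_le_of_sq_le_sq hx hR.le)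
    have hC : ∀ (r : ℝ) q, L (C r * q) = r * L q := by
      intro r q; rw [← smul_eq_C_mul]; simp
    have eu : ∀ q, L (u * q) = (R + 1) * L q + L (X i * q) := by
      intro q; rw [hu, add_mul, map_add, hC, map_one, one_mul]
    have ev : ∀ q, L (v * q) = (R + 1) * L q - L (X i * q) := by
      intro q; rw [hv, add_mul, map_add, hC, mul_assoc, hC]; ring
    have eu1 : L u = (R + 1) + L (X i) := by have := eu 1; simpa [hL1] using this
    have ev1 : L v = (R + 1) - L (X i) := by have := ev 1; simpa [hL1] using this
    have hup : 0 < L u := by rw [eu1]; linarith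
    have hvp : 0 < L v := by rw [ev1]; linarith
    have s1 : (fun q => (L u)⁻¹ * L (u * q)) ∈ StG G := by
      refine ⟨(L u)⁻¹ • L.comp (LinearMap.mulLeft ℝ u), ?_, ?_, ?_⟩
      · intro g hg p
        exact mul_nonneg (by positivity) (hLu g hg p)
      · simp [hup.ne']
      · ext; simp
    have s2 : (fun q => (L v)⁻¹ * L (v * q)) ∈ StG G := by
      refine ⟨(L v)⁻¹ • L.comp (LinearMap.mulLeft ℝ v), ?_, ?_, ?_⟩
      · intro g hg p
        exact mul_nonneg (by positivity) (hLv g hg p)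
      · simp [hvp.ne']
      · ext; simp
    have := hext s1 s2 ⟨L u / (2 * (R + 1)), L v / (2 * (R + 1)), by positivity, by positivity, by
      rw [eu1, ev1]; field_simp; ring, by
      ext q
      simp only [Pi.add_apply, Pi.smul_apply, smul_eq_mul]
      have : L u / (2 * (R + 1)) * ((L u)⁻¹ * L (u * q)) + L v / (2 * (R + 1)) * ((L v)⁻¹ * L (v * q))
        = (L (u * q) + L (v * q)) / (2 * (R + 1)) := by field_simp
      rw [this, eu, ev]; field_simp; ring⟩
    have h3 := congrFun this q
    rw [inv_mul_eq_iff_eq_mul₀ hup.ne', eu, eu1] at h3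
    linarith
  have hev : ∀ q, L q = eval (fun i => L (X i)) q := by
    intro q
    induction q using MvPolynomial.induction_on with
    | C a =>
      have : (C a : MvPolynomial σ ℝ) = a • 1 := by rw [smul_eq_C_mul, mul_one]
      rw [eval_C, this, map_smul, hL1]; simp
    | add p q hp hq => rw [map_add, map_add, hp, hq]
    | mul_X p i hp => rw [mul_comm, key, hp, map_mul, eval_X]
  refine ⟨fun i => L (X i), fun g hg => ?_, hev⟩
  rw [← hev]
  simpa using hL g hg 1

end moment

section rep
variable {σ : Type*} {G : Set (MvPolynomial σ ℝ)} {R : ℝ}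

/-- the basic closed semialgebraic set -/
def KG (G : Set (MvPolynomial σ ℝ)) : Set (σ → ℝ) := {c | ∀ g ∈ G, 0 ≤ eval c g}

lemma KG_closed : IsClosed (KG G) := by
  unfold KG
  simp only [ofPred_forall]
  exact isClosed_iInter fun a => isClosed_iInter fun b =>
    isClosed_le (by fun_prop) (MvPolynomial.continuous_eval a)

lemma KG_compact (hR : 0 < R) (hB : BdG G R) : IsCompact (KG G) := by
  refine IsCompact.of_isClosed_subset
    (isCompact_univ_pi (s := fun q => Icc (-R) R) fun q => isCompact_Icc)
    KG_closed ?_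
  intro c hc i _
  have := hB (MvPolynomial.aeval (R := ℝ) c).toLinearMap (by
    intro g hg p
    have := hc g hg
    simp only [AlgHom.toLinearMap_apply, map_mul, map_pow]
    positivity) i 1
  simp only [AlgHom.toLinearMap_apply, map_mul, map_pow] at this
  simp at this
  exact abs_le.1 (abs_le_of_sq_le_sq this hR.le)

lemma moment_rep [Fintype σ] (h1 : 1 ∈ G) (hR : 0 < R) (hB : BdG G R) (L : MvPolynomial σ ℝ →ₗ[ℝ] ℝ)
    (hL : ClG G L) (hL1 : L 1 = 1) :
    ∃ μ : ProbabilityMeasure (KG G), ∀ q, L q = ∫ c, eval c.1 q ∂(μ : Measure (KG G)) := by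
  have : CompactSpace (KG G) := isCompact_iff_compactSpace.1 (KG_compact hR hB)
  let bc : MvPolynomial σ ℝ → BoundedContinuousFunction (KG G) ℝ := fun q =>
    BoundedContinuousFunction.mkOfCompact
      ⟨fun c => eval c.1 q, (MvPolynomial.continuous_eval q).comp continuous_subtype_val⟩
  let Φ : ProbabilityMeasure (KG G) → (MvPolynomial σ ℝ → ℝ) := fun μ q =>
    ∫ c, bc q c ∂(μ : Measure (KG G))
  have hint : ∀ (μ : ProbabilityMeasure (KG G)) q, Integrable (bc q) (μ : Measure (KG G)) :=
    fun μ q => BoundedContinuousFunction.integrable _ _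
  have hΦ : Continuous Φ := continuous_pi fun q =>
    ProbabilityMeasure.continuous_integral_boundedContinuousFunction (bc q)
  have hTc : IsCompact (range Φ) := isCompact_range hΦ
  have hTconv : Convex ℝ (range Φ) := by
    rintro _ ⟨μ, rfl⟩ _ ⟨ν, rfl⟩ a b ha hb hab
    refine ⟨⟨ENNReal.ofReal a • (μ : Measure (KG G)) + ENNReal.ofReal b • (ν : Measure (KG G)), ⟨?_⟩⟩, ?_⟩
    · simp [← ENNReal.ofReal_add ha hb, hab]
    · ext q
      simp only [Φ, ProbabilityMeasure.coe_mk]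
      rw [integral_add_measure ((hint μ q).smul_measure ENNReal.ofReal_ne_top)
        ((hint ν q).smul_measure ENNReal.ofReal_ne_top), integral_smul_measure,
        integral_smul_measure]
      simp [ha, hb]
  have hsub : StG G ⊆ range Φ := by
    rw [← closure_convexHull_extremePoints (StG_compact h1 hB) StG_convex]
    refine closure_minimal (convexHull_min ?_ hTconv) hTc.isClosed
    intro F hF
    obtain ⟨c, hc, hFc⟩ := StG_ext h1 hR hB hF
    refine ⟨⟨Measure.dirac ⟨c, hc⟩, inferInstance⟩, ?_⟩
    ext q
    simp only [Φ, ProbabilityMeasure.coe_mk]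
    rw [integral_dirac, hFc]
    rfl
  obtain ⟨μ, hμ⟩ := hsub ⟨L, hL, hL1, rfl⟩
  exact ⟨μ, fun q => (congrFun hμ q).symm⟩

end rep

section relax

section filt
set_option linter.unusedSectionVars false
variable {σ ι : Type*} [Fintype σ] [Fintype ι] {H : ι → MvPolynomial σ ℝ}
  {l : Filter (MvPolynomial σ ℝ →ₗ[ℝ] ℝ)}

lemma filt_sos (g : MvPolynomial σ ℝ) (hg : ∀ q, ∀ᶠ L in l, 0 ≤ L (g * q ^ 2))
    (s : MvPolynomial σ ℝ) (hs : IsSumSq s) (q) : ∀ᶠ L in l, 0 ≤ L (s * g * q ^ 2) := by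
  induction hs with
  | zero => simp
  | @sq_add a s' hs ih =>
    filter_upwards [ih, hg (a * q)] with L h1 h2
    rw [show (a * a + s') * g * q ^ 2 = g * (a * q) ^ 2 + s' * g * q ^ 2 by ring, map_add]
    exact add_nonneg h2 h1

lemma filt_arch (hsq : ∀ q, ∀ᶠ L in l, 0 ≤ L (q ^ 2))
    (hH : ∀ j q, ∀ᶠ L in l, 0 ≤ L (H j * q ^ 2))
    {N : ℝ} {σ0 : MvPolynomial σ ℝ} {τ : ι → MvPolynomial σ ℝ}
    (h0 : IsSumSq σ0) (hτ : ∀ j, IsSumSq (τ j))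
    (harch : C N - (∑ i : σ, X i ^ 2) = σ0 + ∑ j, τ j * H j) (i : σ) (q) :
    ∀ᶠ L in l, L ((X i * q) ^ 2) ≤ (|N| + 1) ^ 2 * L (q ^ 2) := by
  classical
  have a1 := filt_sos (l := l) 1 (by simpa using hsq) σ0 h0 q
  have a2 : ∀ᶠ L in l, ∀ j, 0 ≤ L (τ j * H j * q ^ 2) :=
    eventually_all.2 fun j => filt_sos (H j) (hH j) (τ j) (hτ j) q
  have a3 : ∀ᶠ L in l, ∀ i, 0 ≤ L ((X i * q) ^ 2) := eventually_all.2 fun i => hsq _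
  filter_upwards [a1, a2, a3, hsq q] with L h1 h2 h3 h4
  have e : N • q ^ 2 = (∑ i : σ, (X i * q) ^ 2) + (σ0 * 1 * q ^ 2 + ∑ j, τ j * H j * q ^ 2) := by
    rw [smul_eq_C_mul]
    simp only [mul_pow, ← Finset.sum_mul]
    linear_combination q ^ 2 * harch
  have e2 := congrArg L e
  simp only [map_add, map_smul, map_sum, smul_eq_mul] at e2
  have h5 : 0 ≤ ∑ j, L (τ j * H j * q ^ 2) := Finset.sum_nonneg fun j _ => h2 j
  have h6 : L ((X i * q) ^ 2) ≤ ∑ i, L ((X i * q) ^ 2) :=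
    Finset.single_le_sum (f := fun i => L ((X i * q) ^ 2)) (fun i _ => h3 i) (Finset.mem_univ i)
  have h7 : N ≤ (|N| + 1) ^ 2 := by nlinarith [le_abs_self N, abs_nonneg N]
  have := mul_le_mul_of_nonneg_right h7 h4
  linarith

lemma filt_bound {R : ℝ} (hsq : ∀ q, ∀ᶠ L in l, 0 ≤ L (q ^ 2)) (h1 : ∀ᶠ L in l, L 1 = 1)
    (hB : ∀ i q, ∀ᶠ L in l, L ((X i * q) ^ 2) ≤ R ^ 2 * L (q ^ 2)) (q : MvPolynomial σ ℝ) :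
    ∃ B : ℝ, ∀ᶠ L in l, L (q ^ 2) ≤ B := by
  induction q using MvPolynomial.induction_on with
  | C a =>
    refine ⟨a ^ 2, ?_⟩
    filter_upwards [h1] with L h
    have : (C a : MvPolynomial σ ℝ) ^ 2 = (a ^ 2) • 1 := by rw [smul_eq_C_mul, map_pow, mul_one]
    rw [this, map_smul, h]; simp
  | add p q hp hq =>
    obtain ⟨B1, hB1⟩ := hp
    obtain ⟨B2, hB2⟩ := hq
    refine ⟨2 * B1 + 2 * B2, ?_⟩
    filter_upwards [hB1, hB2, hsq (p - q)] with L a1 a2 a3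
    have e : (p + q) ^ 2 = (2 : ℝ) • p ^ 2 + (2 : ℝ) • q ^ 2 - (p - q) ^ 2 := by
      simp only [smul_eq_C_mul, map_ofNat]; ring
    rw [e]
    simp only [map_add, map_smul, map_sub, smul_eq_mul]
    linarith
  | mul_X p i hp =>
    obtain ⟨B, hB'⟩ := hp
    refine ⟨R ^ 2 * B, ?_⟩
    filter_upwards [hB', hB i p] with L a1 a2
    rw [mul_comm]
    exact a2.trans (mul_le_mul_of_nonneg_left a1 (by positivity))

lemma filt_abs {R : ℝ} (hsq : ∀ q, ∀ᶠ L in l, 0 ≤ L (q ^ 2)) (h1 : ∀ᶠ L in l, L 1 = 1)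
    (hB : ∀ i q, ∀ᶠ L in l, L ((X i * q) ^ 2) ≤ R ^ 2 * L (q ^ 2)) (q : MvPolynomial σ ℝ) :
    ∃ B : ℝ, ∀ᶠ L in l, |L q| ≤ B := by
  obtain ⟨B, hB'⟩ := filt_bound hsq h1 hB q
  refine ⟨1 + B, ?_⟩
  filter_upwards [hB', h1, hsq (q + 1), hsq (q - 1), hsq q] with L a1 a2 a3 a4 a5
  have e : (q + 1) ^ 2 = q ^ 2 + (2 : ℝ) • q + 1 := by
      simp only [smul_eq_C_mul, map_ofNat]; ring
  have e' : (q - 1) ^ 2 = q ^ 2 - (2 : ℝ) • q + 1 := by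
      simp only [smul_eq_C_mul, map_ofNat]; ring
  rw [e] at a3
  rw [e'] at a4
  simp only [map_add, map_smul, map_sub, smul_eq_mul, a2] at a3 a4
  rw [abs_le]
  constructor <;> linarith

lemma filt_lim (U : Ultrafilter (MvPolynomial σ ℝ →ₗ[ℝ] ℝ))
    (hU : ∀ q, ∃ B : ℝ, ∀ᶠ L in (U : Filter (MvPolynomial σ ℝ →ₗ[ℝ] ℝ)), |L q| ≤ B) :
    ∃ Λ : MvPolynomial σ ℝ →ₗ[ℝ] ℝ, ∀ q,
      Tendsto (fun L : MvPolynomial σ ℝ →ₗ[ℝ] ℝ => L q) U (𝓝 (Λ q)) := by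
  have : ∀ q, ∃ x : ℝ, Tendsto (fun L : MvPolynomial σ ℝ →ₗ[ℝ] ℝ => L q) U (𝓝 x) := by
    intro q
    obtain ⟨B, hB⟩ := hU q
    obtain ⟨x, -, hx⟩ := (isCompact_Icc (a := -B) (b := B)).ultrafilter_le_nhds
      (U.map fun L => L q) (by
        rw [le_principal_iff, Ultrafilter.mem_coe, Ultrafilter.mem_map]
        filter_upwards [hB] with L hL
        exact abs_le.1 hL)
    exact ⟨x, hx⟩
  choose Λ hΛ using this
  refine ⟨{ toFun := Λ, map_add' := fun a b => ?_, map_smul' := fun c a => ?_ }, hΛ⟩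
  · refine tendsto_nhds_unique (hΛ (a + b)) ?_
    simpa using (hΛ a).add (hΛ b)
  · refine tendsto_nhds_unique (hΛ (c • a)) ?_
    simpa using (hΛ a).const_mul c

end filt

/-- `Lz` as a linear map. -/
def Lzl (n p : ℕ) (z : (Fin n → ℕ) → (Fin p → ℕ) → ℝ) :
    MvPolynomial (Fin n ⊕ Fin p) ℝ →ₗ[ℝ] ℝ :=
  (basisMonomials (Fin n ⊕ Fin p) ℝ).constr ℝ
    (fun d => z (fun k => d (Sum.inl k)) (fun l => d (Sum.inr l)))

lemma Lzl_monomial (n p : ℕ) (z) (d) (c : ℝ) : Lzl n p z (monomial d c) =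
    c * z (fun k => d (Sum.inl k)) (fun l => d (Sum.inr l)) := by
  have : (monomial d c : MvPolynomial (Fin n ⊕ Fin p) ℝ) =
      c • basisMonomials (Fin n ⊕ Fin p) ℝ d := by
    rw [coe_basisMonomials, smul_monomial]; simp
  rw [this, map_smul, Lzl, Module.Basis.constr_basis, smul_eq_mul]

lemma Lz_eq (n p : ℕ) (z q) : Lz n p z q = Lzl n p z q := by
  conv_rhs => rw [q.as_sum]
  rw [map_sum, Lz]
  exact Finset.sum_congr rfl fun d _ => (Lzl_monomial _ _ _ _ _).symm

lemma degOK_of_le (n p i : ℕ) (q : MvPolynomial (Fin n ⊕ Fin p) ℝ) (h : q.totalDegree ≤ i) :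
    DegOK n p i q := by
  intro d hd
  have := le_totalDegree hd
  rw [Finsupp.sum_fintype _ _ (fun _ => rfl), Fintype.sum_sum_type] at this
  constructor <;> omega

/-- filter of eventually feasible functionals -/
def feasF (n p : ℕ) {ι : Type*} [Fintype ι] (H : ι → MvPolynomial (Fin n ⊕ Fin p) ℝ)
    (γ : (Fin p → ℕ) → ℝ) : Filter (MvPolynomial (Fin n ⊕ Fin p) ℝ →ₗ[ℝ] ℝ) :=
  Filter.map (fun x : ℕ × ((Fin n → ℕ) → (Fin p → ℕ) → ℝ) => Lzl n p x.2)
    (comap Prod.fst atTop ⊓ 𝓟 {x | RelaxFeasible n p H γ x.1 x.2})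

lemma feasF_iff (n p : ℕ) {ι : Type*} [Fintype ι] {H : ι → MvPolynomial (Fin n ⊕ Fin p) ℝ}
    {γ : (Fin p → ℕ) → ℝ} {P : (MvPolynomial (Fin n ⊕ Fin p) ℝ →ₗ[ℝ] ℝ) → Prop} : (∀ᶠ L in feasF n p H γ, P L) ↔
    ∀ᶠ i in atTop, ∀ z, RelaxFeasible n p H γ i z → P (Lzl n p z) := by
  unfold feasF
  rw [eventually_map, eventually_inf_principal, eventually_comap]
  apply eventually_congr
  filter_upwards with i
  constructor
  · intro h z hz
    exact h (i, z) rfl hz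
  · rintro h ⟨j, z⟩ rfl hz
    exact h z hz

lemma feasF_sq (n p : ℕ) {ι : Type*} [Fintype ι] {H : ι → MvPolynomial (Fin n ⊕ Fin p) ℝ}
    {γ : (Fin p → ℕ) → ℝ} (q) : ∀ᶠ L in feasF n p H γ, 0 ≤ L (q ^ 2) := by
  rw [feasF_iff]
  filter_upwards [eventually_ge_atTop q.totalDegree] with i hi z hz
  rw [← Lz_eq]
  exact hz.1 q (degOK_of_le _ _ _ _ hi)

lemma feasF_H (n p : ℕ) {ι : Type*} [Fintype ι] {H : ι → MvPolynomial (Fin n ⊕ Fin p) ℝ}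
    {γ : (Fin p → ℕ) → ℝ} (j q) : ∀ᶠ L in feasF n p H γ, 0 ≤ L (H j * q ^ 2) := by
  rw [feasF_iff]
  filter_upwards [eventually_ge_atTop (q.totalDegree + halfDeg (H j))] with i hi z hz
  rw [← Lz_eq]
  exact hz.2.1 j q (degOK_of_le _ _ _ _ (by omega))

lemma feasF_y (n p : ℕ) {ι : Type*} [Fintype ι] {H : ι → MvPolynomial (Fin n ⊕ Fin p) ℝ}
    {γ : (Fin p → ℕ) → ℝ} (β : Fin p →₀ ℕ) : ∀ᶠ L in feasF n p H γ,
      L (rename Sum.inr (monomial β 1)) = γ β := by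
  rw [feasF_iff]
  filter_upwards [eventually_ge_atTop (∑ l, β l)] with i hi z hz
  rw [rename_monomial, Lzl_monomial, one_mul]
  have := hz.2.2 β (by omega)
  rw [← this]
  congr 1
  · ext k
    rw [Finsupp.mapDomain_of_notMem_range]
    simp
  · ext k
    rw [Finsupp.mapDomain_apply Sum.inr_injective]

end relax

section meas
variable {n p : ℕ}

lemma ae_bound_int {E : Type*} [TopologicalSpace E] [MeasurableSpace E] [BorelSpace E]
    (ν : Measure E) [IsFiniteMeasure ν] {K : Set E} (hK : IsCompact K)
    (hν : ∀ᵐ w ∂ν, w ∈ K) {F : E → ℝ} (hF : Continuous F) : Integrable F ν := by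
  obtain ⟨B, hB⟩ := hK.exists_bound_of_continuousOn hF.continuousOn
  refine Integrable.of_bound hF.measurable.aestronglyMeasurable B ?_
  filter_upwards [hν] with w hw using hB w hw

lemma measure_ext_poly (φ₁ φ₂ : Measure (Fin p → ℝ)) [IsProbabilityMeasure φ₁]
    [IsProbabilityMeasure φ₂] {Y : Set (Fin p → ℝ)} (hY : IsCompact Y)
    (h1 : ∀ᵐ y ∂φ₁, y ∈ Y) (h2 : ∀ᵐ y ∂φ₂, y ∈ Y)
    (h : ∀ g : MvPolynomial (Fin p) ℝ, ∫ y, eval y g ∂φ₁ = ∫ y, eval y g ∂φ₂) : φ₁ = φ₂ := by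
  have : CompactSpace Y := isCompact_iff_compactSpace.1 hY
  apply ext_of_forall_integral_eq_of_IsFiniteMeasure
  intro u
  have key : ∀ ε > 0, |∫ y, u y ∂φ₁ - ∫ y, u y ∂φ₂| ≤ 2 * ε := by
    intro ε hε
    let T : MvPolynomial (Fin p) ℝ →ₐ[ℝ] C(Y, ℝ) :=
      MvPolynomial.aeval fun i => ⟨fun y => y.1 i, (continuous_apply i).comp continuous_subtype_val⟩
    have hT : ∀ g (y : Y), T g y = eval y.1 g := by
      intro g y
      induction g using MvPolynomial.induction_on with
      | C a => simp [T]
      | add p q hp hq => rw [map_add, map_add, ContinuousMap.add_apply, hp, hq]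
      | mul_X p i hp => rw [map_mul, map_mul, ContinuousMap.mul_apply, hp]; simp [T]
    have hsep : (T.range).SeparatesPoints := by
      intro a b hab
      obtain ⟨i, hi⟩ : ∃ i, a.1 i ≠ b.1 i := by
        by_contra hc
        push Not at hc
        exact hab (Subtype.ext (funext hc))
      refine ⟨T (X i), ⟨T (X i), ⟨X i, rfl⟩, rfl⟩, ?_⟩
      rw [hT, hT, eval_X, eval_X]
      exact hi
    obtain ⟨⟨_, g, rfl⟩, hg⟩ :=
      ContinuousMap.exists_mem_subalgebra_near_continuous_of_separatesPoints T.range hsep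
        (fun y : Y => u y.1) (u.continuous.comp continuous_subtype_val) ε hε
    have hg' : ∀ y ∈ Y, ‖eval y g - u y‖ ≤ ε := by
      intro y hy
      have := (hg ⟨y, hy⟩).le
      simp only [AlgHom.toRingHom_eq_coe, RingHom.coe_coe] at this
      rw [hT] at this
      exact this
    have hb : ∀ (φ : Measure (Fin p → ℝ)) [IsProbabilityMeasure φ], (∀ᵐ y ∂φ, y ∈ Y) →
        |∫ y, eval y g ∂φ - ∫ y, u y ∂φ| ≤ ε := by
      intro φ _ hφ
      rw [← integral_sub (ae_bound_int φ hY hφ (MvPolynomial.continuous_eval g))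
        (ae_bound_int φ hY hφ u.continuous)]
      have := norm_integral_le_of_norm_le_const (μ := φ) (f := fun y => eval y g - u y) (C := ε)
        (by filter_upwards [hφ] with y hy using hg' y hy)
      simpa using this
    have b1 := abs_le.1 (hb φ₁ h1)
    have b2 := abs_le.1 (hb φ₂ h2)
    rw [h g] at b1
    rw [abs_le]
    constructor <;> linarith [b1.1, b1.2, b2.1, b2.2]
  by_contra hne
  have h0 : 0 < |∫ y, u y ∂φ₁ - ∫ y, u y ∂φ₂| := abs_pos.2 (sub_ne_zero.2 hne)
  have := key (|∫ y, u y ∂φ₁ - ∫ y, u y ∂φ₂| / 4) (by positivity)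
  linarith

variable {K : Set ((Fin n → ℝ) × (Fin p → ℝ))} {F : (Fin n → ℝ) × (Fin p → ℝ) → ℝ}
  {φ : Measure (Fin p → ℝ)} {J : (Fin p → ℝ) → ℝ} {xs : (Fin p → ℝ) → (Fin n → ℝ)}

lemma xs_aemeas (hK : IsCompact K) (hF : Continuous F)
    (hJ : ∀ᵐ y ∂φ, ∀ x, (x, y) ∈ K → J y ≤ F (x, y))
    (hu : ∀ᵐ y ∂φ, ∀ x, (x, y) ∈ K → F (x, y) = J y → x = xs y)
    (hx : ∀ᵐ y ∂φ, (xs y, y) ∈ K ∧ F (xs y, y) = J y) : AEMeasurable xs φ := by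
  have hnull : NullMeasurable xs φ := by
    have : @Measurable (NullMeasurableSpace (Fin p → ℝ) φ) (Fin n → ℝ) _ _ xs := by
      apply measurable_of_isClosed
      intro S hS
      change NullMeasurableSet (xs ⁻¹' S) φ
      let P : ℚ → Set (Fin p → ℝ) := fun c => Prod.snd '' (K ∩ {w | F w ≤ c})
      let Q : ℚ → Set (Fin p → ℝ) := fun c => Prod.snd '' (K ∩ {w | F w ≤ c} ∩ {w | w.1 ∈ S})
      have hcl : ∀ c : ℚ, IsClosed {w | F w ≤ c} := fun c => isClosed_le hF continuous_const
      have hP : ∀ c, MeasurableSet (P c) := fun c =>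
        ((hK.inter_right (hcl c)).image continuous_snd).measurableSet
      have hQ : ∀ c, MeasurableSet (Q c) := fun c =>
        (((hK.inter_right (hcl c)).inter_right (hS.preimage continuous_fst)).image
          continuous_snd).measurableSet
      have hM : MeasurableSet (⋂ c, (P c)ᶜ ∪ Q c) :=
        MeasurableSet.iInter fun c => (hP c).compl.union (hQ c)
      refine hM.nullMeasurableSet.congr ?_
      filter_upwards [hJ, hu, hx] with y h1 h2 h3
      apply propext
      change y ∈ (⋂ c, (P c)ᶜ ∪ Q c) ↔ xs y ∈ S
      constructor
      · intro h
        have h' : ∀ c : ℚ, J y ≤ c → ∃ x, (x, y) ∈ K ∧ F (x, y) ≤ c ∧ x ∈ S := by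
          intro c hc
          rcases mem_iInter.1 h c with h | h
          · exact absurd ⟨(xs y, y), ⟨h3.1, by change F (xs y, y) ≤ c; rw [h3.2]; exact hc⟩, rfl⟩ h
          · obtain ⟨⟨x, y'⟩, ⟨⟨a, b⟩, d⟩, rfl⟩ := h
            exact ⟨x, a, b, d⟩
        have hD : IsCompact (K ∩ ({w | w.1 ∈ S} ∩ {w | w.2 = y})) :=
          hK.inter_right ((hS.preimage continuous_fst).inter
            (isClosed_eq continuous_snd continuous_const))
        obtain ⟨c, hc⟩ := exists_rat_gt (J y)
        obtain ⟨x, a1, a2, a3⟩ := h' c hc.le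
        obtain ⟨⟨x0, y0⟩, ⟨b1, b2, b3⟩, hmin⟩ := hD.exists_isMinOn
          ⟨(x, y), a1, a3, rfl⟩ hF.continuousOn
        change y0 = y at b3
        subst b3
        have : F (x0, y0) ≤ J y0 := by
          apply le_of_forall_gt_imp_ge_of_dense
          intro r hr
          obtain ⟨c, c1, c2⟩ := exists_rat_btwn hr
          obtain ⟨x, a1, a2, a3⟩ := h' c c1.le
          have := hmin (show (x, y0) ∈ _ from ⟨a1, a3, rfl⟩)
          change F (x0, y0) ≤ F (x, y0) at this
          linarith
        rw [← h2 x0 b1 (le_antisymm this (h1 x0 b1))]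
        exact b2
      · intro h
        refine mem_iInter.2 fun c => ?_
        by_cases hc : J y ≤ c
        · exact Or.inr ⟨(xs y, y), ⟨⟨h3.1, by change F (xs y, y) ≤ c; rw [h3.2]; exact hc⟩, h⟩, rfl⟩
        · left
          rintro ⟨⟨x, y'⟩, ⟨a, b⟩, rfl⟩
          exact hc ((h1 x a).trans b)
    exact fun s hs => this hs
  exact hnull.aemeasurable

lemma nu_graph [IsProbabilityMeasure φ] (hK : IsCompact K) (hF : Continuous F)
    (hJ : ∀ᵐ y ∂φ, ∀ x, (x, y) ∈ K → J y ≤ F (x, y))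
    (hu : ∀ᵐ y ∂φ, ∀ x, (x, y) ∈ K → F (x, y) = J y → x = xs y)
    (hx : ∀ᵐ y ∂φ, (xs y, y) ∈ K ∧ F (xs y, y) = J y)
    (ν : Measure ((Fin n → ℝ) × (Fin p → ℝ))) [IsProbabilityMeasure ν]
    (hνK : ∀ᵐ w ∂ν, w ∈ K) (hνφ : ν.map Prod.snd = φ)
    (hle : ∫ w, F w ∂ν ≤ ∫ y, F (xs y, y) ∂φ) : ∀ᵐ w ∂ν, w.1 = xs w.2 := by
  have hxm := xs_aemeas hK hF hJ hu hx
  have hpm : AEMeasurable (fun y => (xs y, y)) φ := hxm.prodMk aemeasurable_id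
  have hlift : ∀ {P : (Fin p → ℝ) → Prop}, (∀ᵐ y ∂φ, P y) → ∀ᵐ w ∂ν, P w.2 := by
    intro P hP
    rw [← hνφ] at hP
    exact ae_of_ae_map measurable_snd.aemeasurable hP
  let g : (Fin p → ℝ) → ℝ := fun y => F (xs y, y)
  have hg : AEStronglyMeasurable g φ :=
    (hF.measurable.comp_aemeasurable hpm).aestronglyMeasurable
  have hgint : Integrable g φ := by
    obtain ⟨B, hB⟩ := hK.exists_bound_of_continuousOn hF.continuousOn
    refine Integrable.of_bound hg B ?_
    filter_upwards [hx] with y hy using hB _ hy.1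
  have e1 : ∫ y, g y ∂φ = ∫ w, g w.2 ∂ν := by
    have hg' := hg
    rw [← hνφ] at hg'
    conv_lhs => rw [← hνφ]
    rw [integral_map measurable_snd.aemeasurable hg']
  have hg2 : Integrable (fun w : (Fin n → ℝ) × (Fin p → ℝ) => g w.2) ν := by
    have hgint' := hgint
    rw [← hνφ] at hgint'
    exact hgint'.comp_measurable measurable_snd
  have hFi := ae_bound_int ν hK hνK hF
  have hnn : 0 ≤ᵐ[ν] fun w => F w - g w.2 := by
    filter_upwards [hνK, hlift hJ, hlift hx] with w h1 h2 h3
    have := h2 w.1 h1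
    change 0 ≤ F w - F (xs w.2, w.2)
    rw [h3.2]
    linarith
  have hz : ∫ w, (F w - g w.2) ∂ν = 0 := by
    apply le_antisymm
    · rw [integral_sub hFi hg2, ← e1]
      linarith
    · exact integral_nonneg_of_ae hnn
  have := (integral_eq_zero_iff_of_nonneg_ae hnn (hFi.sub hg2)).1 hz
  filter_upwards [this, hνK, hlift hu, hlift hx] with w h1 h2 h3 h4
  apply h3 w.1 h2
  rw [← h4.2]
  have h5 : F w - F (xs w.2, w.2) = 0 := h1
  change F w = _
  linarith

end meas

section final
variable {n p : ℕ}

lemma continuous_evalXY (q : MvPolynomial (Fin n ⊕ Fin p) ℝ) : Continuous (evalXY n p q) := by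
  unfold evalXY
  refine (MvPolynomial.continuous_eval q).comp (continuous_pi fun i => ?_)
  rcases i with i | i
  · exact (continuous_apply i).comp continuous_fst
  · exact (continuous_apply i).comp continuous_snd

lemma bdG_of_arch {ι : Type*} [Fintype ι] {H : ι → MvPolynomial (Fin n ⊕ Fin p) ℝ}
    (harch : ArchimedeanQM n p H) : ∃ R : ℝ, 0 < R ∧ BdG (insert 1 (range H)) R ∧
      ∀ γ i q, ∀ᶠ L in feasF n p H γ, L ((X i * q) ^ 2) ≤ R ^ 2 * L (q ^ 2) := by
  obtain ⟨N, σ0, τ, h0, hτ, h⟩ := harch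
  refine ⟨|N| + 1, by positivity, ?_, ?_⟩
  · intro L hL i q
    have := filt_arch (l := pure L) (H := H) (fun q => hL.sq (by simp) q)
      (fun j q => hL (H j) (by simp) q) h0 hτ h i q
    exact this
  · intro γ i q
    exact filt_arch (fun q => feasF_sq n p q) (fun j q => feasF_H n p j q) h0 hτ h i q

lemma rep2 {ι : Type*} [Fintype ι] {H : ι → MvPolynomial (Fin n ⊕ Fin p) ℝ}
    (harch : ArchimedeanQM n p H) (L : MvPolynomial (Fin n ⊕ Fin p) ℝ →ₗ[ℝ] ℝ)
    (h1 : L 1 = 1) (hsq : ∀ q, 0 ≤ L (q ^ 2)) (hH : ∀ j q, 0 ≤ L (H j * q ^ 2)) :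
    ∃ ν : Measure ((Fin n → ℝ) × (Fin p → ℝ)), IsProbabilityMeasure ν ∧
      (∀ᵐ w ∂ν, ∀ j, 0 ≤ evalXY n p (H j) w) ∧ ∀ q, L q = ∫ w, evalXY n p q w ∂ν := by
  obtain ⟨R, hR, hB, -⟩ := bdG_of_arch harch
  obtain ⟨μ, hμ⟩ := moment_rep (G := insert 1 (range H)) (by simp) hR hB L (by
    rintro g (rfl | ⟨j, rfl⟩) q
    · simpa using hsq q
    · exact hH j q) h1
  let T : KG (insert 1 (range H)) → (Fin n → ℝ) × (Fin p → ℝ) :=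
    fun c => (fun i => c.1 (Sum.inl i), fun i => c.1 (Sum.inr i))
  have hT : Measurable T := by
    refine Measurable.prodMk (measurable_pi_iff.2 fun i => ?_) (measurable_pi_iff.2 fun i => ?_)
    · exact (measurable_pi_apply _).comp measurable_subtype_coe
    · exact (measurable_pi_apply _).comp measurable_subtype_coe
  have he : ∀ q c, evalXY n p q (T c) = eval c.1 q := by
    intro q c
    unfold evalXY
    congr 2
    ext i
    rcases i with i | i <;> rfl
  refine ⟨(μ : Measure _).map T, Measure.isProbabilityMeasure_map hT.aemeasurable, ?_, ?_⟩
  · rw [ae_map_iff hT.aemeasurable]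
    · refine ae_of_all _ fun c j => ?_
      rw [he]
      exact c.2 _ (by simp)
    · simp only [ofPred_forall]
      exact MeasurableSet.iInter fun j => measurableSet_le measurable_const
        (continuous_evalXY _).measurable
  · intro q
    rw [integral_map hT.aemeasurable (continuous_evalXY _).measurable.aestronglyMeasurable, hμ]
    simp only [he]

lemma Lzl_measure (ν : Measure ((Fin n → ℝ) × (Fin p → ℝ))) [IsProbabilityMeasure ν]
    {K : Set ((Fin n → ℝ) × (Fin p → ℝ))} (hK : IsCompact K) (hν : ∀ᵐ w ∂ν, w ∈ K)
    (q : MvPolynomial (Fin n ⊕ Fin p) ℝ) :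
    Lzl n p (fun α β => ∫ w, (∏ i, w.1 i ^ α i) * ∏ i, w.2 i ^ β i ∂ν) q
      = ∫ w, evalXY n p q w ∂ν := by
  have hi : ∀ q, Integrable (evalXY n p q) ν := fun q => ae_bound_int ν hK hν (continuous_evalXY q)
  induction q using MvPolynomial.induction_on' with
  | monomial d c =>
    rw [Lzl_monomial, ← integral_const_mul]
    congr 1
    ext w
    unfold evalXY
    rw [eval_monomial, Finsupp.prod_fintype _ _ (by simp), Fintype.prod_sum_type]
    rfl
  | add q r hq hr =>
    rw [map_add, hq, hr, ← integral_add (hi q) (hi r)]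
    congr 1
    ext w
    simp [evalXY]

lemma feasible_measure {ι : Type*} [Fintype ι] {H : ι → MvPolynomial (Fin n ⊕ Fin p) ℝ}
    (ν : Measure ((Fin n → ℝ) × (Fin p → ℝ))) [IsProbabilityMeasure ν]
    {K : Set ((Fin n → ℝ) × (Fin p → ℝ))} (hK : IsCompact K) (hν : ∀ᵐ w ∂ν, w ∈ K)
    (hKH : ∀ w ∈ K, ∀ j, 0 ≤ evalXY n p (H j) w) (γ : (Fin p → ℕ) → ℝ)
    (hγ : ∀ β, ∫ w, ∏ i, w.2 i ^ β i ∂ν = γ β) (i : ℕ) :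
    RelaxFeasible n p H γ i (fun α β => ∫ w, (∏ i, w.1 i ^ α i) * ∏ i, w.2 i ^ β i ∂ν) := by
  refine ⟨fun q _ => ?_, fun j q _ => ?_, fun β _ => ?_⟩
  · rw [Lz_eq, Lzl_measure ν hK hν]
    refine integral_nonneg fun w => ?_
    simp only [evalXY, map_pow, Pi.zero_apply]
    positivity
  · rw [Lz_eq, Lzl_measure ν hK hν]
    refine integral_nonneg_of_ae ?_
    filter_upwards [hν] with w hw
    have := hKH w hw j
    simp only [evalXY, map_pow, map_mul, Pi.zero_apply] at this ⊢
    positivity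
  · simpa using hγ β

end final

/-- the relaxations compute the persistency
`φ({y : x*_k(y) = 1})` of a boolean variable `x_k`, with the corresponding
necessary and sufficient conditions. -/
theorem stmt17 (n p m s : ℕ)
    (f : MvPolynomial (Fin n ⊕ Fin p) ℝ)
    (hx : Fin m → MvPolynomial (Fin n ⊕ Fin p) ℝ)
    (hy : Fin s → MvPolynomial (Fin p) ℝ)
    (H : Fin m ⊕ Fin s → MvPolynomial (Fin n ⊕ Fin p) ℝ)
    (hH : H = Sum.elim hx (fun k => rename Sum.inr (hy k)))
    (Y : Set (Fin p → ℝ)) (hYdef : Y = {y | ∀ k, 0 ≤ eval y (hy k)}) (hYc : IsCompact Y)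
    (K : Set ((Fin n → ℝ) × (Fin p → ℝ)))
    (hKdef : K = {w | w.2 ∈ Y ∧ ∀ j, 0 ≤ evalXY n p (hx j) w}) (hKc : IsCompact K)
    (Ky : (Fin p → ℝ) → Set (Fin n → ℝ))
    (hKy : ∀ y, Ky y = {x | ∀ j, 0 ≤ eval (Sum.elim x y) (hx j)})
    (hne : ∀ y ∈ Y, (Ky y).Nonempty)
    (harch : ArchimedeanQM n p H)
    (φ : Measure (Fin p → ℝ)) [IsProbabilityMeasure φ] (hφY : φ Yᶜ = 0)
    (γ : (Fin p → ℕ) → ℝ)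
    (hγ : ∀ β, γ β = ∫ y in Y, ∏ l, y l ^ β l ∂φ)
    (J : (Fin p → ℝ) → ℝ)
    (hJ : ∀ y, J y = sInf ((fun x => evalXY n p f (x, y)) '' Ky y))
    (Xstar : (Fin p → ℝ) → Set (Fin n → ℝ))
    (hXs : ∀ y, Xstar y = {x ∈ Ky y | evalXY n p f (x, y) = J y})
    (k : Fin n)
    (j1 : Fin m) (hj1 : hx j1 = X (Sum.inl k) ^ 2 - X (Sum.inl k))
    (j2 : Fin m) (hj2 : hx j2 = X (Sum.inl k) - X (Sum.inl k) ^ 2)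
    (xstar : (Fin p → ℝ) → (Fin n → ℝ))
    (hxu : ∀ᵐ y ∂φ, Xstar y = {xstar y})
    (zi : ℕ → (Fin n → ℕ) → (Fin p → ℕ) → ℝ)
    (hzi : ∀ i, iZero n p H f ≤ i →
      RelaxFeasible n p H γ i (zi i) ∧
      Lz n p (zi i) f ≤ rhoSDP n p H γ f i + 1 / (i : ℝ)) :
    Tendsto (fun i => zi i (fun j => if j = k then 1 else 0) (fun _ => 0)) atTop
      (𝓝 ((φ {y | y ∈ Y ∧ xstar y k = 1}).toReal)) ∧
    ((∀ᵐ y ∂φ, xstar y k = 1) ↔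
      Tendsto (fun i => zi i (fun j => if j = k then 1 else 0) (fun _ => 0))
        atTop (𝓝 1)) ∧
    ((∀ᵐ y ∂φ, xstar y k = 0) ↔
      Tendsto (fun i => zi i (fun j => if j = k then 1 else 0) (fun _ => 0))
        atTop (𝓝 0)) := by
  have hφY' : ∀ᵐ y ∂φ, y ∈ Y := hφY
  have hYm : MeasurableSet Y := hYc.isClosed.measurableSet
  have hKy' : ∀ y ∈ Y, ∀ x, x ∈ Ky y ↔ (x, y) ∈ K := by
    intro y hy x
    rw [hKy, hKdef]
    simp [hy, evalXY]
  have hKH : ∀ w, w ∈ K ↔ ∀ j, 0 ≤ evalXY n p (H j) w := by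
    intro w
    have e : ∀ q : MvPolynomial (Fin p) ℝ, evalXY n p (rename Sum.inr q) w = eval w.2 q := by
      intro q
      unfold evalXY
      rw [eval_rename]
      rfl
    rw [hKdef, hYdef, hH]
    simp only [mem_ofPred_eq, Sum.forall, Sum.elim_inl, Sum.elim_inr, e]
    exact and_comm
  set F := evalXY n p f with hFdef
  have hF : Continuous F := continuous_evalXY f
  have hJle : ∀ y ∈ Y, ∀ x, (x, y) ∈ K → J y ≤ F (x, y) := by
    intro y hy x hx
    rw [hJ]
    refine csInf_le ?_ ⟨x, (hKy' y hy x).2 hx, rfl⟩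
    obtain ⟨B, hB⟩ := hKc.exists_bound_of_continuousOn hF.continuousOn
    refine ⟨-B, ?_⟩
    rintro _ ⟨x', hx', rfl⟩
    exact (abs_le.1 (hB _ ((hKy' y hy x').1 hx'))).1
  have hJ1 : ∀ᵐ y ∂φ, ∀ x, (x, y) ∈ K → J y ≤ F (x, y) := by
    filter_upwards [hφY'] with y hy using hJle y hy
  have hu : ∀ᵐ y ∂φ, ∀ x, (x, y) ∈ K → F (x, y) = J y → x = xstar y := by
    filter_upwards [hφY', hxu] with y hy h x h1 h2
    have : x ∈ Xstar y := by rw [hXs]; exact ⟨(hKy' y hy x).2 h1, h2⟩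
    rw [h] at this
    exact this
  have hx' : ∀ᵐ y ∂φ, (xstar y, y) ∈ K ∧ F (xstar y, y) = J y := by
    filter_upwards [hφY', hxu] with y hy h
    have : xstar y ∈ Xstar y := by rw [h]; rfl
    rw [hXs] at this
    exact ⟨(hKy' y hy _).1 this.1, this.2⟩
  have hxm := xs_aemeas hKc hF hJ1 hu hx'
  have hpm : AEMeasurable (fun y => (xstar y, y)) φ := hxm.prodMk aemeasurable_id
  have hγ' : ∀ β, γ β = ∫ y, ∏ l, y l ^ β l ∂φ := by
    intro β
    rw [hγ, Measure.restrict_eq_self_of_ae_mem hφY']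
  -- boolean values
  have hbool : ∀ᵐ y ∂φ, xstar y k = 0 ∨ xstar y k = 1 := by
    filter_upwards [hx'] with y hy
    have h1 := (hKH _).1 hy.1 (Sum.inl j1)
    have h2 := (hKH _).1 hy.1 (Sum.inl j2)
    rw [hH] at h1 h2
    simp only [Sum.elim_inl, hj1, hj2, evalXY, map_sub, map_pow, eval_X] at h1 h2
    have : xstar y k * (xstar y k - 1) = 0 := by nlinarith
    rcases mul_eq_zero.1 this with h | h
    · exact Or.inl h
    · exact Or.inr (by linarith)
  have hintk : ∫ y, xstar y k ∂φ = (φ {y | y ∈ Y ∧ xstar y k = 1}).toReal := by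
    have hkm : AEMeasurable (fun y => xstar y k) φ := (measurable_pi_apply k).comp_aemeasurable hxm
    have hnm : NullMeasurableSet {y | y ∈ Y ∧ xstar y k = 1} φ :=
      hYm.nullMeasurableSet.inter (hkm.nullMeasurable (measurableSet_singleton (1 : ℝ)))
    have e : (fun y => xstar y k) =ᵐ[φ] {y | y ∈ Y ∧ xstar y k = 1}.indicator (fun _ => (1 : ℝ)) := by
      filter_upwards [hφY', hbool] with y hy hb
      rcases hb with hb | hb
      · rw [indicator_of_notMem, hb]
        rintro ⟨-, h⟩
        rw [hb] at h
        exact zero_ne_one h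
      · rw [indicator_of_mem (show y ∈ {y | y ∈ Y ∧ xstar y k = 1} from ⟨hy, hb⟩), hb]
    rw [integral_congr_ae e, integral_indicator₀ hnm]
    simp [Measure.real]
  -- the optimal measure
  let ν0 := φ.map (fun y => (xstar y, y))
  have : IsProbabilityMeasure ν0 := Measure.isProbabilityMeasure_map hpm
  have hν0K : ∀ᵐ w ∂ν0, w ∈ K := by
    refine (ae_map_iff (p := fun w => w ∈ K) hpm hKc.isClosed.measurableSet).2 ?_
    filter_upwards [hx'] with y hy using hy.1
  have hfeas := feasible_measure (H := H) ν0 hKc hν0K (fun w hw => (hKH w).1 hw) γ (by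
    intro β
    rw [hγ', integral_map hpm]
    exact (Continuous.aestronglyMeasurable (by fun_prop)))
  have hL0 : ∫ w, F w ∂ν0 = ∫ y, F (xstar y, y) ∂φ :=
    integral_map hpm hF.measurable.aestronglyMeasurable
  obtain ⟨R, hR, -, hBF⟩ := bdG_of_arch harch
  have hsqF := fun q => feasF_sq n p (H := H) (γ := γ) q
  have h1F : ∀ᶠ L in feasF n p H γ, L 1 = 1 := by
    filter_upwards [feasF_y n p (H := H) (γ := γ) 0] with L hL
    have e : (monomial 0 1 : MvPolynomial (Fin p) ℝ) = 1 := by simp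
    rw [e, map_one] at hL
    rw [hL, hγ']
    simp
  have habs := filt_abs hsqF h1F (hBF γ)
  have hrho : ∀ᶠ i in atTop, rhoSDP n p H γ f i ≤ ∫ y, F (xstar y, y) ∂φ := by
    obtain ⟨B, hB⟩ := habs f
    rw [feasF_iff] at hB
    filter_upwards [hB] with i hi
    rw [← hL0, ← Lzl_measure ν0 hKc hν0K, ← Lz_eq]
    refine csInf_le ⟨-B, ?_⟩ ⟨_, hfeas i, rfl⟩
    rintro _ ⟨z, hz, rfl⟩
    rw [Lz_eq]
    exact (abs_le.1 (hi z hz)).1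
  have hzF : Tendsto (fun i => Lzl n p (zi i)) atTop (feasF n p H γ) := by
    intro s hs
    have := (feasF_iff n p (P := fun L => L ∈ s)).1 hs
    rw [Filter.mem_map]
    filter_upwards [this, eventually_ge_atTop (iZero n p H f)] with i h1 h2
    exact h1 _ (hzi i h2).1
  have hmain : Tendsto (fun i => zi i (fun j => if j = k then 1 else 0) (fun _ => 0)) atTop
      (𝓝 ((φ {y | y ∈ Y ∧ xstar y k = 1}).toReal)) := by
    have ez : ∀ i, zi i (fun j => if j = k then 1 else 0) (fun _ => 0)
        = Lzl n p (zi i) (X (Sum.inl k)) := by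
      intro i
      rw [X, Lzl_monomial, one_mul]
      congr 1
      · ext j
        simp [Finsupp.single_apply, eq_comm]
      · ext j
        simp
    simp only [ez]
    rw [tendsto_iff_ultrafilter]
    intro U hU
    have hUF : (↑(U.map fun i => Lzl n p (zi i)) : Filter _) ≤ feasF n p H γ :=
      (Filter.map_mono hU).trans hzF
    obtain ⟨Λ, hΛ⟩ := filt_lim (U.map fun i => Lzl n p (zi i)) (fun q => by
      obtain ⟨B, hB⟩ := habs q
      exact ⟨B, hUF hB⟩)
    have hΛsq : ∀ q, 0 ≤ Λ (q ^ 2) := fun q => ge_of_tendsto (hΛ _) (hUF (hsqF q))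
    have hΛH : ∀ j q, 0 ≤ Λ (H j * q ^ 2) := fun j q =>
      ge_of_tendsto (hΛ _) (hUF (feasF_H n p j q))
    have hΛ1 : Λ 1 = 1 := tendsto_nhds_unique_of_eventuallyEq (hΛ 1) tendsto_const_nhds
      (hUF h1F)
    have hΛy : ∀ β : Fin p →₀ ℕ, Λ (rename Sum.inr (monomial β 1)) = γ β := fun β =>
      tendsto_nhds_unique_of_eventuallyEq (hΛ _) tendsto_const_nhds (hUF (feasF_y n p β))
    have hΛf : Λ f ≤ ∫ y, F (xstar y, y) ∂φ := by
      have hlim : Tendsto (fun i : ℕ => (∫ y, F (xstar y, y) ∂φ) + 1 / (i : ℝ)) U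
          (𝓝 (∫ y, F (xstar y, y) ∂φ)) := by
        have := (tendsto_const_nhds (x := ∫ y, F (xstar y, y) ∂φ)).add
          tendsto_one_div_atTop_nhds_zero_nat
        rw [add_zero] at this
        exact this.mono_left hU
      have h2 : Tendsto (fun i => Lzl n p (zi i) f) U (𝓝 (Λ f)) := hΛ f
      refine le_of_tendsto_of_tendsto h2 hlim (hU ?_)
      filter_upwards [hrho, eventually_ge_atTop (iZero n p H f)] with i a1 a2
      have := (hzi i a2).2
      rw [Lz_eq] at this
      linarith
    obtain ⟨ν, hνp, hνK, hνe⟩ := rep2 harch Λ hΛ1 hΛsq hΛH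
    have hνK' : ∀ᵐ w ∂ν, w ∈ K := by
      filter_upwards [hνK] with w hw using (hKH w).2 hw
    have : IsProbabilityMeasure (ν.map Prod.snd) :=
      Measure.isProbabilityMeasure_map measurable_snd.aemeasurable
    have hνφ : ν.map Prod.snd = φ := by
      refine measure_ext_poly _ _ hYc ?_ hφY' ?_
      · refine (ae_map_iff (p := fun y => y ∈ Y) measurable_snd.aemeasurable hYm).2 ?_
        filter_upwards [hνK'] with w hw
        rw [hKdef] at hw
        exact hw.1
      · intro g
        rw [integral_map measurable_snd.aemeasurable
          (MvPolynomial.continuous_eval g).measurable.aestronglyMeasurable]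
        have e : ∀ (g : MvPolynomial (Fin p) ℝ) w, evalXY n p (rename Sum.inr g) w = eval w.2 g := by
          intro q w
          unfold evalXY
          rw [eval_rename]
          rfl
        have e2 : ∫ w, eval w.2 g ∂ν = Λ (rename Sum.inr g) := by
          rw [hνe]
          simp only [e]
        rw [e2]
        induction g using MvPolynomial.induction_on' with
        | monomial d c =>
          have : (monomial d c : MvPolynomial (Fin p) ℝ) = c • monomial d 1 := by
            rw [smul_monomial]; simp
          rw [this, map_smul, map_smul, hΛy, hγ', smul_eq_mul, ← integral_const_mul]
          congr 1
          ext y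
          rw [smul_eval, eval_monomial, one_mul, Finsupp.prod_fintype _ _ (by simp)]
        | add q r hq hr =>
          rw [map_add, map_add, hq, hr, ← integral_add]
          · simp
          · exact ae_bound_int φ hYc hφY' (MvPolynomial.continuous_eval q)
          · exact ae_bound_int φ hYc hφY' (MvPolynomial.continuous_eval r)
          all_goals
            rw [hνe]
            simp only [e]
    have hgraph := nu_graph hKc hF hJ1 hu hx' ν hνK' hνφ (by rw [← hνe]; exact hΛf)
    have hval : Λ (X (Sum.inl k)) = (φ {y | y ∈ Y ∧ xstar y k = 1}).toReal := by
      rw [← hintk, hνe]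
      have hkm : AEStronglyMeasurable (fun y => xstar y k) (ν.map Prod.snd) := by
        rw [hνφ]
        exact ((measurable_pi_apply k).comp_aemeasurable hxm).aestronglyMeasurable
      have e3 : ∫ y, xstar y k ∂φ = ∫ w, xstar w.2 k ∂ν := by
        conv_lhs => rw [← hνφ]
        rw [integral_map measurable_snd.aemeasurable hkm]
      rw [e3]
      refine integral_congr_ae ?_
      filter_upwards [hgraph] with w hw
      rw [← hw]
      simp [evalXY]
    rw [← hval]
    exact hΛ (X (Sum.inl k))
  have hae1 : (∀ᵐ y ∂φ, xstar y k = 1) → (φ {y | y ∈ Y ∧ xstar y k = 1}).toReal = 1 := by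
    intro h
    rw [← hintk, integral_congr_ae h]
    simp
  refine ⟨hmain, ⟨fun h => hae1 h ▸ hmain, fun h => ?_⟩, ⟨fun h => ?_, fun h => ?_⟩⟩
  · have e := tendsto_nhds_unique hmain h
    have hkm : AEMeasurable (fun y => xstar y k) φ := (measurable_pi_apply k).comp_aemeasurable hxm
    have hnm : NullMeasurableSet {y | y ∈ Y ∧ xstar y k = 1} φ :=
      hYm.nullMeasurableSet.inter (hkm.nullMeasurable (measurableSet_singleton (1 : ℝ)))
    have e1 : φ {y | y ∈ Y ∧ xstar y k = 1} = 1 := by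
      rw [← ENNReal.ofReal_toReal (measure_ne_top φ _), e, ENNReal.ofReal_one]
    have e2 : ∀ᵐ y ∂φ, y ∈ {y | y ∈ Y ∧ xstar y k = 1} := by
      rw [ae_iff]
      exact (prob_compl_eq_zero_iff₀ hnm).2 e1
    filter_upwards [e2] with y hy using hy.2
  · have : (φ {y | y ∈ Y ∧ xstar y k = 1}).toReal = 0 := by
      rw [← hintk, integral_congr_ae h]
      simp
    exact this ▸ hmain
  · have e := tendsto_nhds_unique hmain h
    have e1 : φ {y | y ∈ Y ∧ xstar y k = 1} = 0 := by
      rw [← ENNReal.ofReal_toReal (measure_ne_top φ _), e, ENNReal.ofReal_zero]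
    have e2 := measure_eq_zero_iff_ae_notMem.1 e1
    filter_upwards [e2, hφY', hbool] with y h1 h2 h3
    rcases h3 with h3 | h3
    · exact h3
    · exact absurd ⟨h2, h3⟩ h1
end
end

section
/- Let K ⊂ ℝ^n × ℝ^p be compact, f : K → ℝ continuous, and let π denote the marginal map sending a finite Borel measure μ on K to its pushforward on ℝ^p under the projection (x,y) ↦ y. Then the set D := { (πμ, ∫_K f dμ) : μ a finite (nonnegative) Borel measure on K } is closed in M(Y) × ℝ, where M(Y) carries the weak-* topology σ(M(Y), C(Y)) induced by duality with bounded continuous functions. -/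
open MeasureTheory Set

/-- with `K ⊂ ℝ^n × ℝ^p` compact and `f` continuous on `K`, the set
`D = {(πμ, ∫_K f dμ) : μ a finite Borel measure on K}` is closed in `M(Y) × ℝ`, where
the space of finite measures carries the topology of weak convergence (duality with
bounded continuous functions). -/
theorem stmt19 (n p : ℕ)
    (Y : Set (Fin p → ℝ)) (hYc : IsCompact Y)
    (K : Set ((Fin n → ℝ) × (Fin p → ℝ))) (hKc : IsCompact K)
    (hKY : ∀ w ∈ K, w.2 ∈ Y)
    (f : (Fin n → ℝ) × (Fin p → ℝ) → ℝ) (hf : ContinuousOn f K) :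
    IsClosed {vr : FiniteMeasure (Fin p → ℝ) × ℝ |
      ∃ μ : Measure ((Fin n → ℝ) × (Fin p → ℝ)), IsFiniteMeasure μ ∧ μ Kᶜ = 0 ∧
        μ.map Prod.snd = (vr.1 : Measure (Fin p → ℝ)) ∧
        vr.2 = ∫ w in K, f w ∂μ} := by
  obtain ⟨F, -, hF⟩ := BoundedContinuousFunction.exists_norm_eq_domRestrict_eq_of_closed
    (Y := (Fin n → ℝ) × (Fin p → ℝ)) (s := K)
    (haveI := isCompact_iff_compactSpace.mp hKc
     BoundedContinuousFunction.mkOfCompact ⟨K.domRestrict f, hf.domRestrict⟩) hKc.isClosed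
  have hFf : ∀ w ∈ K, F w = f w := fun w hw => by
    have := DFunLike.congr_fun hF ⟨w, hw⟩
    exact this
  let G : FiniteMeasure ((Fin n → ℝ) × (Fin p → ℝ)) → FiniteMeasure (Fin p → ℝ) × ℝ :=
    fun μ => (μ.map Prod.snd, ∫ w, F w ∂(μ : Measure _))
  have hG : Continuous G :=
    (FiniteMeasure.continuous_map continuous_snd).prodMk
      (FiniteMeasure.continuous_integral_boundedContinuousFunction F)
  have hint : ∀ μ : Measure ((Fin n → ℝ) × (Fin p → ℝ)), μ Kᶜ = 0 →
      ∫ w in K, f w ∂μ = ∫ w, F w ∂μ := fun μ h => by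
    rw [← setIntegral_congr_fun hKc.measurableSet hFf, Measure.restrict_eq_self_of_ae_mem]
    exact h
  refine isClosed_of_closure_subset fun x hx => ?_
  set D := {vr : FiniteMeasure (Fin p → ℝ) × ℝ |
      ∃ μ : Measure ((Fin n → ℝ) × (Fin p → ℝ)), IsFiniteMeasure μ ∧ μ Kᶜ = 0 ∧
        μ.map Prod.snd = (vr.1 : Measure (Fin p → ℝ)) ∧
        vr.2 = ∫ w in K, f w ∂μ} with hD
  let U : Set (FiniteMeasure (Fin p → ℝ) × ℝ) := {v | v.1.mass < x.1.mass + 1}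
  have hU : IsOpen U := isOpen_lt (by fun_prop) continuous_const
  have hxU : x ∈ U := lt_add_one x.1.mass
  have hC := isCompact_setOfPred_finiteMeasure_le_of_isCompact (x.1.mass + 1) hKc
  have hIm := (hC.image hG).isClosed
  have hx' : x ∈ closure (U ∩ D) := hU.inter_closure ⟨hxU, hx⟩
  have hsub : U ∩ D ⊆ G '' {μ | μ.mass ≤ x.1.mass + 1 ∧ μ Kᶜ = 0} := by
    rintro ⟨ν, r⟩ ⟨hvU, μ, hμ, hμK, hmap, hr⟩
    obtain ⟨m, rfl⟩ : ∃ m : FiniteMeasure ((Fin n → ℝ) × (Fin p → ℝ)),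
        (m : Measure _) = μ := ⟨⟨μ, hμ⟩, rfl⟩
    have hmap' : m.map Prod.snd = ν := Subtype.ext hmap
    refine ⟨m, ⟨?_, ?_⟩, ?_⟩
    · have : m.mass = ν.mass := by
        rw [← hmap']
        exact (FiniteMeasure.map_apply m measurable_snd MeasurableSet.univ).symm
      rw [this]
      exact le_of_lt hvU
    · exact (m.null_iff_toMeasure_null _).2 hμK
    · refine Prod.ext hmap' ?_
      exact ((hint _ hμK).symm.trans hr.symm)
  obtain ⟨μ, ⟨-, hμK⟩, rfl⟩ := closure_minimal hsub hIm hx'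
  have h0 : (μ : Measure _) Kᶜ = 0 := (μ.null_iff_toMeasure_null _).1 hμK
  exact ⟨μ, inferInstance, h0, rfl, (hint _ h0).symm⟩
end
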